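/- Let G ⊆ ℝ^n be a connected definable group in an o-minimal expansion of the real ordered field, regarded as a topological group with the subspace topology. Then every continuous path σ : [0,1] → G is homotopic relative to its endpoints to a continuous path σ' : [0,1] → G whose graph is a definable subset of ℝ^{1+n}. -/

import Mathlib

open FirstOrder

/-- A set of reals is a finite union of singletons and open intervals (possibly unbounded). -/
def IsFiniteUnionOfPointsAndIntervals (s : Set ℝ) : Prop :=
  ∃ (k : ℕ) (f : Fin k → Set ℝ),
    (∀ i, (∃ a, f i = {a}) ∨ (∃ a b, f i = Set.Ioo a b) ∨
      (∃ a, f i = Set.Iio a) ∨ (∃ a, f i = Set.Ioi a) ∨ f i = Set.univ) ∧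
    s = ⋃ i, f i

/-- An o-minimal expansion of the real ordered field: a first-order language together with
an interpretation on `ℝ` in which the graphs of addition and multiplication and the order
relation are definable without parameters, and every subset of `ℝ` definable with parameters
is a finite union of singletons and open intervals. -/
structure OMinimalRealExpansion : Type 1 where
  L : FirstOrder.Language.{0, 0}
  str : L.Structure ℝ
  definable_add : @Set.Definable ℝ (∅ : Set ℝ) L str _ {x : Fin 3 → ℝ | x 0 + x 1 = x 2}
  definable_mul : @Set.Definable ℝ (∅ : Set ℝ) L str _ {x : Fin 3 → ℝ | x 0 * x 1 = x 2}
  definable_lt : @Set.Definable ℝ (∅ : Set ℝ) L str _ {x : Fin 2 → ℝ | x 0 < x 1}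
  o_minimal : ∀ s : Set ℝ,
    @Set.Definable ℝ (Set.univ : Set ℝ) L str _ {x : Fin 1 → ℝ | x 0 ∈ s} →
    IsFiniteUnionOfPointsAndIntervals s

/-- `S.DefSet s` : the set `s` is definable with parameters in the o-minimal structure `S`. -/
def OMinimalRealExpansion.DefSet (S : OMinimalRealExpansion) {α : Type} (s : Set (α → ℝ)) :
    Prop :=
  @Set.Definable ℝ (Set.univ : Set ℝ) S.L S.str α s

/-- A definable group in an o-minimal expansion of the reals: a definable subset of `ℝⁿ`
together with a group structure whose multiplication has definable graph.  It is regarded as a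
topological group with the subspace topology from `ℝⁿ`. -/
def IsDefinableGroup (S : OMinimalRealExpansion) {n : ℕ} (c : Set (Fin n → ℝ)) [Group c] :
    Prop :=
  S.DefSet {x : Fin n → ℝ | x ∈ c} ∧
  S.DefSet {x : Fin 3 × Fin n → ℝ | ∃ a b : c,
    ((a : Fin n → ℝ) = fun j => x (0, j)) ∧ ((b : Fin n → ℝ) = fun j => x (1, j)) ∧
    ((↑(a * b) : Fin n → ℝ) = fun j => x (2, j))}

/-- A topological group (in particular, a Lie group) is Lie-isomorphic to a definable group if
there is a group isomorphism with a definable group in some o-minimal expansion of the real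
ordered field which is also a homeomorphism. -/
def IsLieIsomorphicToDefinableGroup (G : Type*) [Group G] [TopologicalSpace G] : Prop :=
  ∃ (S : OMinimalRealExpansion) (n : ℕ) (c : Set (Fin n → ℝ)) (grp : Group c),
    letI := grp
    IsDefinableGroup S c ∧ ∃ e : G ≃* c, Continuous e ∧ Continuous e.symm

/-- A subgroup of `GL_m(ℝ)` which is a definable subset of the matrix space `M_m(ℝ)` in the
o-minimal structure `S`. -/
def IsDefinableSubgroupOfGL (S : OMinimalRealExpansion) (m : ℕ)
    (G₁ : Subgroup (GL (Fin m) ℝ)) : Prop :=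
  S.DefSet {x : Fin m × Fin m → ℝ | ∃ g : GL (Fin m) ℝ, g ∈ G₁ ∧
    ∀ p : Fin m × Fin m, (g : Matrix (Fin m) (Fin m) ℝ) p.1 p.2 = x p}

/-- A topological group is Lie-isomorphic to a definably linear group if there are `m`, an
o-minimal expansion of the real ordered field, a subgroup `G₁` of `GL_m(ℝ)` which is a
definable subset of `M_m(ℝ)`, and a group isomorphism onto `G₁` that is a homeomorphism. -/
def IsLieIsomorphicToDefinablyLinearGroup (G : Type*) [Group G] [TopologicalSpace G] : Prop :=
  ∃ (m : ℕ) (S : OMinimalRealExpansion) (G₁ : Subgroup (GL (Fin m) ℝ)),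
    IsDefinableSubgroupOfGL S m G₁ ∧ ∃ e : G ≃* G₁, Continuous e ∧ Continuous e.symm

/-!
A definable set `c` is locally conic: every `p ∈ c` has a neighbourhood that contracts to `p` along
definable curves, which stay in `c` when they start in `c`. Hence a path of `c` inside this
neighbourhood is homotopic to the concatenation of the curve from its source to `p` and the reversed
curve from its target, and a Lebesgue number argument cuts an arbitrary path into such pieces.

The contraction respects a finite stratification into which `c` is cut near `p`, built by induction
on the number of variables. After a generic polynomial shear the frontiers of the given sets have
finite fibres in the last coordinate. A definable form of the Tietze extension theorem places them
on the graphs of finitely many continuous definable functions `g₀ ≤ g₁ ≤ ⋯` on the base; the strata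
are the parts of the graphs and of the bands between them over the strata of the base, and a
contraction of the base lifts by linear interpolation between consecutive graphs.
-/

namespace OMinimalRealExpansion

open Set Topology Filter

/-! ### Definable predicates and functions -/

instance (S : OMinimalRealExpansion) : S.L.Structure ℝ := S.str

/-- `S.DefPred P`: the predicate `P` on tuples is definable with parameters. Stating definability
for predicates rather than for sets lets the closure lemmas below follow the shape of a formula. -/
def DefPred (S : OMinimalRealExpansion) {α : Type} (P : (α → ℝ) → Prop) : Prop :=
  S.DefSet {w | P w}

/-- `S.DefFun f`: the real function `f` of a tuple is definable with parameters. -/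
def DefFun (S : OMinimalRealExpansion) {α : Type} (f : (α → ℝ) → ℝ) : Prop :=
  (univ : Set ℝ).DefinableFun S.L f

/-- The tuple `x` with the extra coordinate `t`, indexed by `none`. -/
def snoc {α : Type} (x : α → ℝ) (t : ℝ) : Option α → ℝ := fun o => o.elim t x

/-- The tuple `w` without its coordinate `none`. -/
def init {α : Type} (w : Option α → ℝ) : α → ℝ := fun i => w (some i)

/-- The fibre over `x` of a set of tuples with one extra coordinate. -/
def fiber {α : Type} (A : Set (Option α → ℝ)) (x : α → ℝ) : Set ℝ := {t | snoc x t ∈ A}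

variable {S : OMinimalRealExpansion} {α β γ : Type}

section Snoc

@[simp] theorem snoc_none (x : α → ℝ) (t : ℝ) : snoc x t none = t := rfl

@[simp] theorem snoc_some (x : α → ℝ) (t : ℝ) (i : α) : snoc x t (some i) = x i := rfl

@[simp] theorem init_snoc (x : α → ℝ) (t : ℝ) : init (snoc x t) = x := rfl

@[simp] theorem init_apply (w : Option α → ℝ) (i : α) : init w i = w (some i) := rfl

@[simp] theorem snoc_init (w : Option α → ℝ) : snoc (init w) (w none) = w := by
  funext o; cases o <;> rfl

@[simp] theorem mem_fiber {A : Set (Option α → ℝ)} {x : α → ℝ} {t : ℝ} :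
    t ∈ fiber A x ↔ snoc x t ∈ A := Iff.rfl

theorem apply_none_mem_fiber_init {A : Set (Option α → ℝ)} {w : Option α → ℝ} :
    w none ∈ fiber A (init w) ↔ w ∈ A := by rw [mem_fiber, snoc_init]

theorem continuous_init : Continuous (init : (Option α → ℝ) → α → ℝ) :=
  continuous_pi fun i => continuous_apply (some i)

theorem continuous_snoc : Continuous fun q : (α → ℝ) × ℝ => snoc q.1 q.2 :=
  continuous_pi fun o => by cases o <;> simp only [snoc_none, snoc_some] <;> fun_prop

end Snoc

theorem defPred_of_definable {P : (α → ℝ) → Prop} {A : Set ℝ} (h : A.Definable S.L {w | P w}) :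
    S.DefPred P :=
  h.mono (subset_univ A)

namespace DefPred

variable {P Q : (α → ℝ) → Prop}

protected theorem congr (hP : S.DefPred P) (h : ∀ w, P w ↔ Q w) : S.DefPred Q :=
  (funext fun w => propext (h w) : P = Q) ▸ hP

protected theorem and (hP : S.DefPred P) (hQ : S.DefPred Q) : S.DefPred fun w => P w ∧ Q w :=
  Definable.inter (L := S.L) hP hQ

protected theorem or (hP : S.DefPred P) (hQ : S.DefPred Q) : S.DefPred fun w => P w ∨ Q w :=
  Definable.union (L := S.L) hP hQ

protected theorem not (hP : S.DefPred P) : S.DefPred fun w => ¬ P w :=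
  Definable.compl (L := S.L) hP

protected theorem imp (hP : S.DefPred P) (hQ : S.DefPred Q) : S.DefPred fun w => P w → Q w :=
  (hP.not.or hQ).congr fun _ => imp_iff_not_or.symm

protected theorem iff (hP : S.DefPred P) (hQ : S.DefPred Q) : S.DefPred fun w => P w ↔ Q w :=
  ((hP.imp hQ).and (hQ.imp hP)).congr fun _ => iff_def.symm

protected theorem const (p : Prop) : S.DefPred fun _ : α → ℝ => p := by
  by_cases h : p
  · exact (defPred_of_definable (definable_univ (A := univ))).congr (P := fun _ => True)
      (by simp [h])
  · exact (defPred_of_definable (definable_empty (A := univ))).congr (P := fun _ => False)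
      (by simp [h])

theorem reindex (hP : S.DefPred P) (f : α → β) : S.DefPred fun w : β → ℝ => P fun i => w (f i) :=
  Definable.preimage_comp (L := S.L) f hP

section Quantifiers

variable {ι : Type} [Finite ι]

theorem forall_finite {P : ι → (α → ℝ) → Prop} (h : ∀ i, S.DefPred (P i)) :
    S.DefPred fun w => ∀ i, P i w :=
  (defPred_of_definable (definable_iInter_of_finite (L := S.L) h)).congr
    (P := fun w => w ∈ ⋂ i, {w | P i w}) (by simp)

theorem exists_finite {P : ι → (α → ℝ) → Prop} (h : ∀ i, S.DefPred (P i)) :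
    S.DefPred fun w => ∃ i, P i w :=
  (forall_finite fun i => (h i).not).not.congr fun w => by simp

theorem exists_tuple {P : (α → ℝ) → (ι → ℝ) → Prop}
    (h : S.DefPred fun v : α ⊕ ι → ℝ => P (fun i => v (Sum.inl i)) fun i => v (Sum.inr i)) :
    S.DefPred fun w => ∃ q, P w q :=
  (defPred_of_definable (Definable.exists_of_finite (L := S.L) h)).congr
    (P := fun w => ∃ q, Sum.elim w q ∈ {v | P (fun i => v (Sum.inl i)) fun i => v (Sum.inr i)})
    fun _ => Iff.rfl

theorem forall_tuple {P : (α → ℝ) → (ι → ℝ) → Prop}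
    (h : S.DefPred fun v : α ⊕ ι → ℝ => P (fun i => v (Sum.inl i)) fun i => v (Sum.inr i)) :
    S.DefPred fun w => ∀ q, P w q :=
  (exists_tuple (P := fun w q => ¬ P w q) h.not).not.congr fun w => by simp

theorem exists_real {P : (α → ℝ) → ℝ → Prop}
    (h : S.DefPred fun v : Option α → ℝ => P (fun i => v (some i)) (v none)) :
    S.DefPred fun w => ∃ y, P w y :=
  (exists_tuple (ι := Unit) (P := fun w q => P w (q ()))
    (h.reindex fun o : Option α => o.elim (Sum.inr ()) Sum.inl)).congr fun _ =>
      ⟨fun ⟨q, hq⟩ => ⟨q (), hq⟩, fun ⟨y, hy⟩ => ⟨fun _ => y, hy⟩⟩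

theorem forall_real {P : (α → ℝ) → ℝ → Prop}
    (h : S.DefPred fun v : Option α → ℝ => P (fun i => v (some i)) (v none)) :
    S.DefPred fun w => ∀ y, P w y :=
  (exists_real (P := fun w y => ¬ P w y) h.not).not.congr fun w => by simp

end Quantifiers

theorem coord_lt (i j : α) : S.DefPred fun w : α → ℝ => w i < w j :=
  (defPred_of_definable S.definable_lt).reindex ![i, j]

theorem subst [Finite β] {P : (β → ℝ) → Prop} (hP : S.DefPred P) {e : (α → ℝ) → β → ℝ}
    (he : ∀ j, S.DefFun fun w => e w j) : S.DefPred fun w => P (e w) :=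
  Definable.preimage_map (L := S.L) he hP

protected theorem mem [Finite β] {A : Set (β → ℝ)} (hA : S.DefSet A) {e : (α → ℝ) → β → ℝ}
    (he : ∀ j, S.DefFun fun w => e w j) : S.DefPred fun w => e w ∈ A :=
  subst (P := fun w => w ∈ A) hA he

variable {e f : (α → ℝ) → ℝ}

protected theorem lt (he : S.DefFun e) (hf : S.DefFun f) : S.DefPred fun w => e w < f w :=
  (coord_lt 0 1).subst (e := fun w => ![e w, f w]) (Fin.forall_fin_two.2 ⟨he, hf⟩)

protected theorem le (he : S.DefFun e) (hf : S.DefFun f) : S.DefPred fun w => e w ≤ f w :=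
  (DefPred.lt hf he).not.congr fun _ => not_lt

protected theorem eq (he : S.DefFun e) (hf : S.DefFun f) : S.DefPred fun w => e w = f w :=
  defPred_of_definable (DefinableFun.ofPred_eq (L := S.L) he hf)

end DefPred

namespace DefFun

theorem of_graph {f : (α → ℝ) → ℝ} (h : S.DefPred fun v : Option α → ℝ => v none = f (init v)) :
    S.DefFun f :=
  h.congr fun _ => eq_comm

theorem coord (i : α) : S.DefFun fun w : α → ℝ => w i := DefinableFun.proj S.L

protected theorem const (r : ℝ) : S.DefFun fun _ : α → ℝ => r :=
  S.L.definableFun_const α (mem_univ r)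

protected theorem congr {e f : (α → ℝ) → ℝ} (he : S.DefFun e) (h : ∀ w, e w = f w) : S.DefFun f :=
  funext h ▸ he

theorem comp [Finite β] {f : (β → ℝ) → ℝ} (hf : S.DefFun f) {e : (α → ℝ) → β → ℝ}
    (he : ∀ j, S.DefFun fun w => e w j) : S.DefFun fun w => f (e w) :=
  DefinableFun.comp (L := S.L) he hf

theorem snoc_apply {e : (α → ℝ) → β → ℝ} {t : (α → ℝ) → ℝ} (he : ∀ j, S.DefFun fun w => e w j)
    (ht : S.DefFun t) (j : Option β) : S.DefFun fun w => snoc (e w) (t w) j := by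
  cases j
  exacts [ht, he _]

theorem init_apply {e : (α → ℝ) → Option β → ℝ} {j : β}
    (he : S.DefFun fun w => e w (some j)) : S.DefFun fun w => init (e w) j := he

theorem sumElim_apply {e : (α → ℝ) → β → ℝ} {e' : (α → ℝ) → γ → ℝ}
    (he : ∀ j, S.DefFun fun w => e w j) (he' : ∀ j, S.DefFun fun w => e' w j) (j : β ⊕ γ) :
    S.DefFun fun w => Sum.elim (e w) (e' w) j := by
  cases j
  exacts [he _, he' _]

variable {e f : (α → ℝ) → ℝ}

theorem of_graph_binary {g : ℝ → ℝ → ℝ}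
    (hg : S.DefPred fun w : Fin 3 → ℝ => g (w 0) (w 1) = w 2) (he : S.DefFun e)
    (hf : S.DefFun f) : S.DefFun fun w => g (e w) (f w) :=
  comp (f := fun w : Fin 2 → ℝ => g (w 0) (w 1)) (e := fun w => ![e w, f w])
    (of_graph ((hg.reindex ![some 0, some 1, none]).congr fun _ => eq_comm))
    (Fin.forall_fin_two.2 ⟨he, hf⟩)

protected theorem add (he : S.DefFun e) (hf : S.DefFun f) : S.DefFun fun w => e w + f w :=
  of_graph_binary (g := (· + ·)) (defPred_of_definable S.definable_add) he hf

protected theorem mul (he : S.DefFun e) (hf : S.DefFun f) : S.DefFun fun w => e w * f w :=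
  of_graph_binary (g := (· * ·)) (defPred_of_definable S.definable_mul) he hf

protected theorem neg (he : S.DefFun e) : S.DefFun fun w => -e w :=
  ((DefFun.const (-1)).mul he).congr fun _ => neg_one_mul _

protected theorem sub (he : S.DefFun e) (hf : S.DefFun f) : S.DefFun fun w => e w - f w :=
  (he.add hf.neg).congr fun _ => (sub_eq_add_neg _ _).symm

protected theorem pow (he : S.DefFun e) (n : ℕ) : S.DefFun fun w => e w ^ n := by
  induction n with
  | zero => exact (DefFun.const 1).congr fun w => (pow_zero _).symm
  | succ n ih => exact (ih.mul he).congr fun w => (pow_succ _ _).symm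

protected theorem sum {ι : Type} (s : Finset ι) {e : ι → (α → ℝ) → ℝ} (he : ∀ i, S.DefFun (e i)) :
    S.DefFun fun w => ∑ i ∈ s, e i w := by
  classical
  induction s using Finset.induction_on with
  | empty => exact (DefFun.const 0).congr fun w => Finset.sum_empty.symm
  | insert a s ha ih => exact ((he a).add ih).congr fun w => by rw [Finset.sum_insert ha]

protected theorem ite {P : (α → ℝ) → Prop} [DecidablePred P] (hP : S.DefPred P) (he : S.DefFun e)
    (hf : S.DefFun f) : S.DefFun fun w => if P w then e w else f w :=
  DefinableFun.ite (L := S.L) hP he hf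

protected theorem max (he : S.DefFun e) (hf : S.DefFun f) : S.DefFun fun w => max (e w) (f w) := by
  classical
  exact (DefFun.ite (DefPred.le he hf) hf he).congr fun w => (max_def _ _).symm

protected theorem min (he : S.DefFun e) (hf : S.DefFun f) : S.DefFun fun w => min (e w) (f w) := by
  classical
  exact (DefFun.ite (DefPred.le he hf) he hf).congr fun w => (min_def _ _).symm

protected theorem abs (he : S.DefFun e) : S.DefFun fun w => |e w| :=
  (he.max he.neg).congr fun _ => rfl

protected theorem inv (he : S.DefFun e) : S.DefFun fun w => (e w)⁻¹ := by
  have he' : S.DefFun fun v : Option α → ℝ => e (init v) := DefPred.reindex he (Option.map some)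
  refine of_graph ((((DefPred.eq he' (.const 0)).and (DefPred.eq (coord none) (.const 0))).or
    (DefPred.eq ((coord none).mul he') (.const 1))).congr fun v => ?_)
  by_cases h : e (init v) = 0
  · simp [h]
  · simp only [h, false_and, false_or]
    exact ⟨eq_inv_of_mul_eq_one_left, fun h' => by rw [h', inv_mul_cancel₀ h]⟩

protected theorem div (he : S.DefFun e) (hf : S.DefFun f) : S.DefFun fun w => e w / f w :=
  (he.mul hf.inv).congr fun _ => (div_eq_mul_inv _ _).symm

end DefFun

theorem mem_nhds_pi_iff [Finite α] {A : Set (α → ℝ)} {z : α → ℝ} :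
    A ∈ 𝓝 z ↔ ∃ ε : ℝ, 0 < ε ∧ ∀ x : α → ℝ, (∀ i, |x i - z i| < ε) → x ∈ A := by
  cases nonempty_fintype α
  simp only [Metric.mem_nhds_iff, subset_def, Metric.mem_ball]
  refine exists_congr fun ε => and_congr_right fun hε => forall_congr' fun x => ?_
  rw [dist_pi_lt_iff hε]
  rfl

theorem DefPred.eventually [Finite α] [Finite β] {P : (α → ℝ) → (β → ℝ) → Prop}
    (h : S.DefPred fun v : α ⊕ β → ℝ => P (fun i => v (Sum.inl i)) fun i => v (Sum.inr i))
    {e : (α → ℝ) → β → ℝ} (he : ∀ j, S.DefFun fun w => e w j) :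
    S.DefPred fun w => ∀ᶠ x in 𝓝 (e w), P w x := by
  have hA : S.DefSet {v : α ⊕ β → ℝ | P (fun i => v (Sum.inl i)) fun i => v (Sum.inr i)} := h
  set A := {v : α ⊕ β → ℝ | P (fun i => v (Sum.inl i)) fun i => v (Sum.inr i)}
  have box : S.DefPred fun v : β ⊕ α → ℝ => ∃ ε : ℝ, 0 < ε ∧ ∀ x : β → ℝ,
      (∀ j, |x j - v (Sum.inl j)| < ε) → Sum.elim (fun i => v (Sum.inr i)) x ∈ A :=
    .exists_real (.and (.lt (.const 0) (.coord none)) (.forall_tuple (.imp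
      (.forall_finite fun j => .lt (.abs (.sub (.coord (Sum.inr j)) (.coord _))) (.coord _))
      (.mem hA (.sumElim_apply (fun _ => .coord _) fun _ => .coord _)))))
  exact (box.subst (DefFun.sumElim_apply he .coord)).congr fun w => mem_nhds_pi_iff.symm

-- A tactic in the guise of a lemma: when `h` is omitted, it is found by a search following the
-- syntax of the formula `P`.
theorem definability {P : (α → ℝ) → Prop} (h : S.DefPred P := by
    with_reducible repeat' first
      | exact DefFun.coord _
      | exact DefFun.const _
      | exact DefPred.const _
      | assumption
      | intro _
      | refine DefPred.mem (by first | assumption | apply_assumption) ?_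
      | refine DefPred.and ?_ ?_
      | refine DefPred.or ?_ ?_
      | refine DefPred.not ?_
      | refine DefPred.imp ?_ ?_
      | refine DefPred.iff ?_ ?_
      | refine DefPred.lt ?_ ?_
      | refine DefPred.le ?_ ?_
      | refine DefPred.eq ?_ ?_
      | refine DefFun.snoc_apply ?_ ?_ _
      | refine DefFun.init_apply ?_
      | refine DefFun.sumElim_apply ?_ ?_ _
      | refine DefFun.add ?_ ?_
      | refine DefFun.sub ?_ ?_
      | refine DefFun.mul ?_ ?_
      | refine DefFun.div ?_ ?_
      | refine DefFun.neg ?_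
      | refine DefFun.abs ?_
      | refine DefFun.max ?_ ?_
      | refine DefFun.min ?_ ?_
      | refine DefFun.pow ?_ _
      | refine DefFun.inv ?_
      | refine DefFun.sum _ ?_
      | refine DefPred.exists_real ?_
      | refine DefPred.forall_real ?_
      | refine DefPred.exists_tuple ?_
      | refine DefPred.forall_tuple ?_
      | refine DefPred.eventually ?_ ?_
      | refine DefPred.exists_finite ?_
      | refine DefPred.forall_finite ?_
      | refine DefFun.comp (by first | assumption | apply_assumption) ?_
      | apply_assumption) : S.DefPred P := h

namespace DefFun

protected theorem sSup [Finite α] {P : (α → ℝ) → ℝ → Prop}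
    (h : S.DefPred fun v : Option α → ℝ => P (init v) (v none)) :
    S.DefFun fun w => sSup {t | P w t} := by
  have hA : S.DefSet {v : Option α → ℝ | P (init v) (v none)} := h
  set A := {v : Option α → ℝ | P (init v) (v none)}
  have isLUB : S.DefPred fun v : Option α → ℝ =>
      (∀ t, snoc (init v) t ∈ A → t ≤ v none) ∧
        ∀ u, (∀ t, snoc (init v) t ∈ A → t ≤ u) → v none ≤ u := definability
  have bounded : S.DefPred fun v : Option α → ℝ =>
      (∃ t, snoc (init v) t ∈ A) ∧ ∃ u, ∀ t, snoc (init v) t ∈ A → t ≤ u := definability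
  refine of_graph (((bounded.and isLUB).or
    (bounded.not.and (DefPred.eq (coord none) (.const 0)))).congr fun v => ?_)
  change (_ ∧ IsLUB {t | P (init v) t} (v none) ∨ ¬ ({t | P (init v) t}.Nonempty ∧
    BddAbove {t | P (init v) t}) ∧ _) ↔ _
  by_cases hv : {t | P (init v) t}.Nonempty ∧ BddAbove {t | P (init v) t}
  · have hlub := isLUB_csSup hv.1 hv.2
    exact ⟨fun h => h.elim (fun h => h.2.unique hlub) fun h => (h.1 hv).elim,
      fun h => Or.inl ⟨hv, h ▸ hlub⟩⟩
  · have hzero : sSup {t | P (init v) t} = 0 := by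
      rcases not_and_or.1 hv with h | h
      · rw [not_nonempty_iff_eq_empty.1 h, Real.sSup_empty]
      · exact Real.sSup_of_not_bddAbove h
    rw [hzero]
    exact ⟨fun h => h.elim (fun h => (hv h.1).elim) And.right, fun h => Or.inr ⟨hv, h⟩⟩

theorem sSup_fiber [Finite α] {A : Set (Option α → ℝ)} (hA : S.DefSet A) :
    S.DefFun fun x => sSup (fiber A x) :=
  DefFun.sSup (P := fun x t => snoc x t ∈ A) definability

end DefFun

/-! ### Definable subsets of the line -/

theorem exists_rat_Ioo_subset_of_infinite {s : Set ℝ}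
    (hs : S.DefPred fun w : Unit → ℝ => w () ∈ s) (hinf : s.Infinite) :
    ∃ a b : ℚ, a < b ∧ Ioo (a : ℝ) b ⊆ s := by
  obtain ⟨k, f, hf, rfl⟩ := S.o_minimal s (hs.reindex fun _ : Unit => (0 : Fin 1))
  obtain ⟨i, hi⟩ : ∃ i, (f i).Infinite := by
    by_contra! hfin
    exact hinf (finite_iUnion hfin)
  obtain ⟨a, b, hab, hsub⟩ : ∃ a b : ℝ, a < b ∧ Ioo a b ⊆ f i := by
    rcases hf i with ⟨a, h⟩ | ⟨a, b, h⟩ | ⟨a, h⟩ | ⟨a, h⟩ | h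
    · exact absurd (h ▸ finite_singleton a) hi
    · exact ⟨a, b, nonempty_Ioo.1 (h ▸ hi.nonempty), h.ge⟩
    · exact ⟨a - 1, a, sub_one_lt a, h ▸ Ioo_subset_Iio_self⟩
    · exact ⟨a, a + 1, lt_add_one a, h ▸ Ioo_subset_Ioi_self⟩
    · exact ⟨0, 1, zero_lt_one, h ▸ subset_univ _⟩
  obtain ⟨q, haq, hqb⟩ := exists_rat_btwn hab
  obtain ⟨r, hqr, hrb⟩ := exists_rat_btwn hqb
  exact ⟨q, r, mod_cast hqr, ((Ioo_subset_Ioo haq.le hrb.le).trans hsub).trans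
    (subset_iUnion f i)⟩

theorem defPred_mem_fiber [Finite α] {A : Set (Option α → ℝ)} (hA : S.DefSet A) (x : α → ℝ) :
    S.DefPred fun w : Unit → ℝ => w () ∈ fiber A x :=
  definability (P := fun w : Unit → ℝ => snoc x (w ()) ∈ A)

/-! ### Definable sets with nonempty interior -/

theorem nonempty_interior_of_Ioo_subset_fiber {A : Set (Option α → ℝ)} {U : Set (α → ℝ)}
    (hU : (interior U).Nonempty) {a b : ℝ} (hab : a < b) (h : ∀ x ∈ U, Ioo a b ⊆ fiber A x) :
    (interior A).Nonempty := by
  obtain ⟨x, hx⟩ := hU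
  obtain ⟨t, ht⟩ := nonempty_Ioo.2 hab
  have hopen : IsOpen (init ⁻¹' interior U ∩ (· none) ⁻¹' Ioo a b) :=
    (isOpen_interior.preimage continuous_init).inter
      (isOpen_Ioo.preimage (continuous_apply (A := fun _ : Option α => ℝ) none))
  exact ⟨snoc x t, interior_maximal (fun w hw =>
    apply_none_mem_fiber_init.1 (h _ (interior_subset hw.1) hw.2)) hopen ⟨hx, ht⟩⟩

theorem exists_infinite_of_Ioo_subset_iUnion {ι : Type*} [Countable ι] {T : ι → Set ℝ} {a b : ℝ}
    (hab : a < b) (h : Ioo a b ⊆ ⋃ k, T k) : ∃ k, (T k).Infinite := by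
  by_contra! hfin
  exact hab.not_ge (Cardinal.Real.Ioo_countable_iff.1
    ((countable_iUnion fun k => (hfin k).countable).mono h))

theorem nonempty_interior_reindex_iff (e : α ≃ β) {A : Set (α → ℝ)} :
    (interior {w : β → ℝ | (fun i => w (e i)) ∈ A}).Nonempty ↔ (interior A).Nonempty := by
  let E : (β → ℝ) ≃ₜ (α → ℝ) := (Homeomorph.piCongrLeft (Y := fun _ => ℝ) e).symm
  have : {w : β → ℝ | (fun i => w (e i)) ∈ A} = E ⁻¹' A := rfl
  rw [this, ← E.preimage_interior, E.surjective.nonempty_preimage]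

theorem defSet_Ioo_subset_fiber [Finite α] {A : Set (Option α → ℝ)} (hA : S.DefSet A) (a b : ℝ) :
    S.DefSet {x | Ioo a b ⊆ fiber A x} :=
  (definability : S.DefPred fun x => ∀ t, a < t ∧ t < b → snoc x t ∈ A).congr fun _ => Iff.rfl

theorem exists_nonempty_interior_of_iUnion [Finite α] {ι : Type*} [Countable ι]
    {A : ι → Set (α → ℝ)} (hA : ∀ k, S.DefSet (A k)) (h : (interior (⋃ k, A k)).Nonempty) :
    ∃ k, (interior (A k)).Nonempty := by
  induction α using Finite.induction_empty_option generalizing ι with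
  | of_equiv e ih =>
    simp only [← nonempty_interior_reindex_iff e.symm] at h ⊢
    refine ih (fun k => DefPred.reindex (hA k) e.symm) ?_
    simpa only [mem_iUnion, ofPred_exists] using h
  | h_empty =>
    obtain ⟨k, hk⟩ := mem_iUnion.1 (interior_subset h.some_mem)
    exact ⟨k, h.some, mem_interior_iff_mem_nhds.2 (by simpa [nhds_discrete] using hk)⟩
  | h_option ih =>
    obtain ⟨z, hz⟩ := h
    obtain ⟨ε, hε, hbox⟩ := mem_nhds_pi_iff.1 (mem_interior_iff_mem_nhds.1 hz)
    let B (p : ι × ℚ × ℚ) := {x | (p.2.1 : ℝ) < p.2.2 ∧ Ioo (p.2.1 : ℝ) p.2.2 ⊆ fiber (A p.1) x}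
    have hB (p) : S.DefSet (B p) :=
      DefPred.and (.const _) (defSet_Ioo_subset_fiber (hA p.1) _ _)
    obtain ⟨⟨k, a, b⟩, hk⟩ := ih hB ⟨init z, mem_interior_iff_mem_nhds.2 (mem_nhds_pi_iff.2
      ⟨ε, hε, fun x hx => by
        obtain ⟨k, hk⟩ := exists_infinite_of_Ioo_subset_iUnion (T := fun k => fiber (A k) x)
          (show z none - ε < z none + ε by linarith) fun t ht => by
            have hxt : ∀ o, |snoc x t o - z o| < ε :=
              Option.forall.2 ⟨by rw [snoc_none, abs_lt]; constructor <;> linarith [ht.1, ht.2], hx⟩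
            simpa only [mem_iUnion, mem_fiber] using hbox _ hxt
        obtain ⟨a, b, hab, hsub⟩ :=
          exists_rat_Ioo_subset_of_infinite (defPred_mem_fiber (hA k) x) hk
        exact mem_iUnion.2 ⟨(k, a, b), mod_cast hab, hsub⟩⟩)⟩
    exact ⟨k, nonempty_interior_of_Ioo_subset_fiber hk (interior_subset hk.some_mem).1
      fun x hx => hx.2⟩

theorem nonempty_interior_or_of_union [Finite α] {A B : Set (α → ℝ)} (hA : S.DefSet A)
    (hB : S.DefSet B) (h : (interior (A ∪ B)).Nonempty) :
    (interior A).Nonempty ∨ (interior B).Nonempty := by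
  rw [union_eq_iUnion] at h
  obtain ⟨_ | _, hk⟩ := exists_nonempty_interior_of_iUnion (by rintro (_ | _) <;> assumption) h
  exacts [Or.inr hk, Or.inl hk]

theorem infinite_fiber_iff [Finite α] {F : Set (Option α → ℝ)} (hF : S.DefSet F) (x : α → ℝ) :
    (fiber F x).Infinite ↔ ∃ a b : ℝ, a < b ∧ Ioo a b ⊆ fiber F x := by
  refine ⟨fun h => ?_, fun ⟨a, b, hab, h⟩ => (Ioo_infinite hab).mono h⟩
  obtain ⟨a, b, hab, h⟩ := exists_rat_Ioo_subset_of_infinite (defPred_mem_fiber hF x) h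
  exact ⟨a, b, mod_cast hab, h⟩

theorem defSet_infinite_fiber [Finite α] {F : Set (Option α → ℝ)} (hF : S.DefSet F) :
    S.DefSet {x | (fiber F x).Infinite} :=
  (definability : S.DefPred fun x => ∃ a b : ℝ, a < b ∧ ∀ t, a < t ∧ t < b → snoc x t ∈ F).congr
    fun x => (infinite_fiber_iff hF x).symm

theorem nonempty_interior_of_infinite_fiber [Finite α] {F : Set (Option α → ℝ)}
    (hF : S.DefSet F) (h : (interior {x | (fiber F x).Infinite}).Nonempty) :
    (interior F).Nonempty := by
  obtain ⟨⟨a, b⟩, hk⟩ := exists_nonempty_interior_of_iUnion (S := S) (ι := ℚ × ℚ)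
    (A := fun p => {x | (p.1 : ℝ) < p.2 ∧ Ioo (p.1 : ℝ) p.2 ⊆ fiber F x})
    (fun p => DefPred.and (.const _) (defSet_Ioo_subset_fiber hF _ _))
    (h.mono (interior_mono fun x hx => by
      obtain ⟨a, b, hab, hsub⟩ := exists_rat_Ioo_subset_of_infinite (defPred_mem_fiber hF x) hx
      exact mem_iUnion.2 ⟨(a, b), mod_cast hab, hsub⟩))
  exact nonempty_interior_of_Ioo_subset_fiber hk (interior_subset hk.some_mem).1 fun x hx => hx.2

theorem nonempty_interior_iff_exists_rat_box [Finite α] {A : Set (α → ℝ)} :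
    (interior A).Nonempty ↔
      ∃ (q : α → ℚ) (r : ℚ), 0 < r ∧ ∀ x : α → ℝ, (∀ i, |x i - q i| < r) → x ∈ A := by
  simp only [Set.Nonempty, mem_interior_iff_mem_nhds, mem_nhds_pi_iff]
  constructor
  · rintro ⟨z, ε, hε, h⟩
    obtain ⟨r, hr, hrε⟩ := exists_rat_btwn (half_pos hε)
    choose q hzq hqz using fun i => exists_rat_btwn (lt_add_of_pos_right (z i) hr)
    refine ⟨q, r, mod_cast hr, fun x hx => h x fun i => ?_⟩
    have := abs_lt.1 (hx i)
    rw [abs_lt]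
    constructor <;> linarith [hzq i, hqz i]
  · rintro ⟨q, r, hr, h⟩
    exact ⟨fun i => q i, r, mod_cast hr, h⟩

theorem finite_nonempty_interior_slice [Finite α] {F : Set (Option α → ℝ)} (hF : S.DefSet F)
    (h : ¬ (interior F).Nonempty) : {t | (interior {x | snoc x t ∈ F}).Nonempty}.Finite := by
  by_contra hinf
  have hdef : S.DefPred fun w : Unit → ℝ => w () ∈ {t | (interior {x | snoc x t ∈ F}).Nonempty} :=
    (definability (P := fun w => ∃ z : α → ℝ, ∀ᶠ x in 𝓝 z, snoc x (w ()) ∈ F)).congr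
      fun w => exists_congr fun z => mem_interior_iff_mem_nhds.symm
  obtain ⟨a, b, hab, hsub⟩ := exists_rat_Ioo_subset_of_infinite hdef hinf
  obtain ⟨⟨q, r⟩, hinf'⟩ := exists_infinite_of_Ioo_subset_iUnion (ι := (α → ℚ) × ℚ)
    (T := fun p => {t | 0 < p.2 ∧ ∀ x : α → ℝ, (∀ i, |x i - p.1 i| < p.2) → snoc x t ∈ F})
    (Rat.cast_lt.2 hab) fun t ht => by
      obtain ⟨q, r, hr⟩ := nonempty_interior_iff_exists_rat_box.1 (hsub ht)
      exact mem_iUnion.2 ⟨(q, r), hr⟩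
  have hr : 0 < r := hinf'.nonempty.some_mem.1
  obtain ⟨c, d, hcd, hsub'⟩ := exists_rat_Ioo_subset_of_infinite
    (definability : S.DefPred fun w : Unit → ℝ =>
      0 < r ∧ ∀ x : α → ℝ, (∀ i, |x i - q i| < r) → snoc x (w ()) ∈ F) hinf'
  exact h (nonempty_interior_of_Ioo_subset_fiber (U := {x | ∀ i, |x i - q i| < r})
    (nonempty_interior_iff_exists_rat_box.2 ⟨q, r, hr, fun _ => id⟩) (Rat.cast_lt.2 hcd)
    fun x hx t ht => (hsub' ht).2 x hx)

/-! ### Closures and frontiers -/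

theorem defSet_closure [Finite α] {A : Set (α → ℝ)} (hA : S.DefSet A) : S.DefSet (closure A) :=
  (definability : S.DefPred fun x => ¬ ∀ᶠ y in 𝓝 x, ¬ y ∈ A).congr
    fun _ => mem_closure_iff_frequently.symm

theorem defSet_compl {A : Set (α → ℝ)} (hA : S.DefSet A) : S.DefSet Aᶜ := DefPred.not hA

theorem defSet_frontier [Finite α] {A : Set (α → ℝ)} (hA : S.DefSet A) : S.DefSet (frontier A) := by
  rw [frontier_eq_closure_inter_closure]
  exact DefPred.and (defSet_closure hA) (defSet_closure (defSet_compl hA))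

theorem not_nonempty_interior_frontier [Finite α] {A : Set (α → ℝ)} (hA : S.DefSet A) :
    ¬ (interior (frontier A)).Nonempty := by
  intro h
  rw [← inter_union_compl (frontier A) A] at h
  rcases nonempty_interior_or_of_union (DefPred.and (defSet_frontier hA) hA)
    (DefPred.and (defSet_frontier hA) (defSet_compl hA)) h with ⟨z, hz⟩ | ⟨z, hz⟩
  · exact (interior_subset hz).1.2 (interior_mono inter_subset_right hz)
  · have hcompl : z ∈ interior Aᶜ := interior_mono inter_subset_right hz
    rw [interior_compl] at hcompl
    exact hcompl (interior_subset hz).1.1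

/-! ### Generic continuity -/

theorem defSet_continuousAt [Finite α] {f : (α → ℝ) → ℝ} (hf : S.DefFun f) :
    S.DefSet {x | ContinuousAt f x} :=
  (definability : S.DefPred fun x => ∀ ε : ℝ, 0 < ε → ∀ᶠ y in 𝓝 x, |f y - f x| < ε).congr
    fun x => (Metric.tendsto_nhds (u := f) (f := 𝓝 x)).symm

theorem not_nonempty_interior_not_continuousAt [Finite α] {f : (α → ℝ) → ℝ} (hf : S.DefFun f) :
    ¬ (interior {x | ¬ ContinuousAt f x}).Nonempty := by
  intro h
  let A (p : ℕ × ℤ) : Set (α → ℝ) :=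
    {x | (¬ ∀ᶠ y in 𝓝 x, |f y - f x| < 1 / ((p.1 : ℝ) + 1)) ∧
      (p.2 : ℝ) * (1 / ((p.1 : ℝ) + 1)) ≤ f x ∧ f x < ((p.2 : ℝ) + 1) * (1 / ((p.1 : ℝ) + 1))}
  have hA (p) : S.DefSet (A p) := definability
  obtain ⟨⟨m, j⟩, z, hz⟩ := exists_nonempty_interior_of_iUnion hA (h.mono <| interior_mono <|
    fun x hx => by
      obtain ⟨ε, hε, hosc⟩ : ∃ ε > 0, ¬ ∀ᶠ y in 𝓝 x, |f y - f x| < ε := by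
        simpa [ContinuousAt, Metric.tendsto_nhds, Real.dist_eq] using hx
      obtain ⟨m, hm⟩ := exists_nat_one_div_lt hε
      have hpos : 0 < 1 / ((m : ℝ) + 1) := Nat.one_div_pos_of_nat
      refine mem_iUnion.2 ⟨(m, ⌊f x / (1 / ((m : ℝ) + 1))⌋),
        fun hev => hosc (hev.mono fun y hy => hy.trans hm), ?_, ?_⟩
      · exact (le_div_iff₀ hpos).1 (Int.floor_le _)
      · exact (div_lt_iff₀ hpos).1 (Int.lt_floor_add_one _))
  have hzA := interior_subset hz
  refine hzA.1 (mem_of_superset (mem_interior_iff_mem_nhds.1 hz) fun y hy => ?_)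
  rw [mem_ofPred_eq, abs_lt]
  constructor <;> linarith [hzA.2.1, hzA.2.2, hy.2.1, hy.2.2]

/-! ### Sets without interior -/

/-- Every line parallel to the `i`-th axis meets `D` in finitely many points; the line is given by
its coordinates other than `i`. -/
def FiniteInDirection (i : α) (D : Set (α → ℝ)) : Prop :=
  ∀ u : {a // a ≠ i} → ℝ, {y | y ∈ D ∧ ∀ a : {a // a ≠ i}, y a = u a}.Finite

theorem FiniteInDirection.reindex {e : α ≃ β} {i : α} {D : Set (α → ℝ)}
    (h : FiniteInDirection i D) : FiniteInDirection (e i) {w | (fun a => w (e a)) ∈ D} := by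
  intro u
  refine Finite.of_injOn (f := fun y a => y (e a)) ?_ (fun y _ y' _ hyy => ?_)
    (h fun a => u ⟨e a, fun hc => a.2 (e.injective hc)⟩)
  · exact fun y hy => ⟨hy.1, fun a => hy.2 ⟨e a, _⟩⟩
  · exact funext fun b => by simpa using congrFun hyy (e.symm b)

theorem finiteInDirection_none (F : Set (Option α → ℝ)) :
    FiniteInDirection none {w | w ∈ F ∧ (fiber F (init w)).Finite} := by
  intro u
  let x : α → ℝ := fun a => u ⟨some a, Option.some_ne_none a⟩
  have hinit (w : Option α → ℝ) (hw : ∀ a : {a // a ≠ none}, w a = u a) : init w = x :=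
    funext fun a => hw ⟨some a, _⟩
  by_cases hx : (fiber F x).Finite
  · refine (hx.image (snoc x)).subset fun w hw => ⟨w none, ?_, ?_⟩
    · exact hinit w hw.2 ▸ apply_none_mem_fiber_init.2 hw.1.1
    · exact hinit w hw.2 ▸ snoc_init w
  · exact finite_empty.subset fun w hw => hx (hinit w hw.2 ▸ hw.1.2)

theorem FiniteInDirection.preimage_init {i : α} {D : Set (α → ℝ)} (h : FiniteInDirection i D) :
    FiniteInDirection (some i) (init ⁻¹' D) := by
  intro u
  refine ((h fun a => u ⟨some a, fun hc => a.2 (Option.some_injective _ hc)⟩).image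
    fun x => snoc x (u ⟨none, (Option.some_ne_none i).symm⟩)).subset fun w hw => ⟨init w, ?_, ?_⟩
  · exact ⟨hw.1, fun a => hw.2 ⟨some a, _⟩⟩
  · simp [← hw.2]

theorem exists_cover_finiteInDirection [Finite α] {F : Set (α → ℝ)} (hF : S.DefSet F)
    (h : ¬ (interior F).Nonempty) :
    ∃ D : α → Set (α → ℝ), (∀ i, S.DefSet (D i)) ∧ (∀ i, FiniteInDirection i (D i)) ∧
      ∀ x ∈ F, ∃ i, x ∈ D i := by
  induction α using Finite.induction_empty_option with
  | of_equiv e ih =>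
    obtain ⟨D, hdef, hfin, hcover⟩ := ih (F := {w | (fun i => w (e.symm i)) ∈ F})
      (DefPred.reindex hF e.symm)
      (mt (nonempty_interior_reindex_iff e.symm).1 h)
    refine ⟨fun j => {w | (fun i => w (e i)) ∈ D (e.symm j)}, fun j => DefPred.reindex (hdef _) e,
      fun j => ?_, fun x hx => ?_⟩
    · simpa only [e.apply_symm_apply] using (hfin (e.symm j)).reindex (e := e)
    · obtain ⟨i, hi⟩ := hcover (fun i => x (e i)) (by simpa using hx)
      exact ⟨e i, by simpa using hi⟩
  | h_empty =>
    refine ⟨isEmptyElim, isEmptyElim, isEmptyElim, fun x hx => (h ⟨x, ?_⟩).elim⟩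
    exact mem_interior_iff_mem_nhds.2 (by simpa [nhds_discrete] using hx)
  | h_option ih =>
    obtain ⟨D, hdef, hfin, hcover⟩ := ih (defSet_infinite_fiber hF)
      (mt (nonempty_interior_of_infinite_fiber hF) h)
    refine ⟨fun o => o.elim {w | w ∈ F ∧ (fiber F (init w)).Finite} fun i => init ⁻¹' D i,
      Option.forall.2 ⟨?_, fun i => ?_⟩,
      Option.forall.2 ⟨finiteInDirection_none F, fun i => (hfin i).preimage_init⟩, fun w hw => ?_⟩
    · have hinf := defSet_infinite_fiber hF
      refine DefPred.congr (P := fun w => w ∈ F ∧ ¬ init w ∈ {x | (fiber F x).Infinite})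
        definability fun w => and_congr_right fun _ => not_infinite
    · have := hdef i
      exact definability (P := fun w => init w ∈ D i)
    · by_cases hfib : (fiber F (init w)).Finite
      · exact ⟨none, hw, hfib⟩
      · obtain ⟨i, hi⟩ := hcover _ hfib
        exact ⟨some i, hi⟩

theorem exists_not_nonempty_interior_slice [Finite α] {G : Set (α ⊕ Option β → ℝ)}
    (hfin : ∀ u, {v | Sum.elim u v ∈ G}.Finite) {a b : ℝ} (hab : a < b) :
    ∃ c ∈ Ioo a b, ¬ (interior {u : α → ℝ | ∃ v, Sum.elim u (snoc v c) ∈ G}).Nonempty := by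
  by_contra! hcon
  obtain ⟨q, hq⟩ := exists_infinite_of_Ioo_subset_iUnion (ι := α → ℚ) hab
    (T := fun q => {c | ∃ v, Sum.elim (fun i => (q i : ℝ)) (snoc v c) ∈ G}) fun c hc => by
      obtain ⟨q, r, hr, hbox⟩ := nonempty_interior_iff_exists_rat_box.1 (hcon c hc)
      exact mem_iUnion.2 ⟨q, hbox _ fun i => by simpa using hr⟩
  refine hq (((hfin fun i => (q i : ℝ)).image fun v => v none).subset ?_)
  rintro c ⟨v, hv⟩
  exact ⟨snoc v c, hv, rfl⟩

theorem exists_nonempty_interior_section [Finite α] {A : Set (Option α → ℝ)}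
    (h : (interior A).Nonempty) :
    ∃ a b, a < b ∧ ∀ c ∈ Ioo a b, (interior {x | snoc x c ∈ A}).Nonempty := by
  obtain ⟨z, hz⟩ := h
  obtain ⟨ε, hε, hbox⟩ := mem_nhds_pi_iff.1 (mem_interior_iff_mem_nhds.1 hz)
  refine ⟨z none - ε, z none + ε, by linarith, fun c hc => ⟨init z, ?_⟩⟩
  refine mem_interior_iff_mem_nhds.2 (mem_nhds_pi_iff.2 ⟨ε, hε, fun x hx => hbox _ ?_⟩)
  refine Option.forall.2 ⟨?_, hx⟩
  rw [snoc_none, abs_lt]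
  constructor <;> linarith [hc.1, hc.2]

theorem finite_section_of_finiteInDirection {i : α} {D : Set (α → ℝ)} (hD : FiniteInDirection i D)
    {G : Set (α ⊕ Option β → ℝ)} (hG : ∀ u, {v | Sum.elim u v ∈ G}.Finite) (c : ℝ)
    (u : {a // a ≠ i} → ℝ) :
    {v : β → ℝ | ∃ y : α → ℝ, (y ∈ D ∧ ∀ a : {a // a ≠ i}, y a = u a) ∧
      Sum.elim y (snoc v c) ∈ G}.Finite := by
  refine ((hD u).biUnion fun y _ => (hG y).image init).subset ?_
  rintro v ⟨y, hy, hv⟩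
  exact mem_biUnion hy ⟨snoc v c, hv, rfl⟩

theorem exists_finiteInDirection_section [Finite α] [Finite β] {G : Set (α ⊕ Option β → ℝ)}
    (hG : S.DefSet G) (hfin : ∀ u, {v | Sum.elim u v ∈ G}.Finite)
    (h : (interior {v | ∃ u, Sum.elim u v ∈ G}).Nonempty) :
    ∃ (c : ℝ) (i : α) (D : Set (α → ℝ)), S.DefSet D ∧ FiniteInDirection i D ∧
      (interior {v : β → ℝ | ∃ u, u ∈ D ∧ Sum.elim u (snoc v c) ∈ G}).Nonempty := by
  obtain ⟨a, b, hab, hsection⟩ := exists_nonempty_interior_section h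
  obtain ⟨c, hc, hslice⟩ := exists_not_nonempty_interior_slice hfin hab
  obtain ⟨D, hD, hDfin, hcover⟩ := exists_cover_finiteInDirection
    (definability : S.DefPred fun u : α → ℝ => ∃ v : β → ℝ, Sum.elim u (snoc v c) ∈ G) hslice
  obtain ⟨i, hi⟩ := exists_nonempty_interior_of_iUnion (S := S)
    (A := fun i => {v : β → ℝ | ∃ u, u ∈ D i ∧ Sum.elim u (snoc v c) ∈ G})
    (fun i => definability (P := fun v : β → ℝ => ∃ u, u ∈ D i ∧ Sum.elim u (snoc v c) ∈ G))
    ((hsection c hc).mono <| interior_mono <| by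
      rintro v ⟨u, hu⟩
      obtain ⟨i, hi⟩ := hcover u ⟨v, hu⟩
      exact mem_iUnion.2 ⟨i, u, hi, hu⟩)
  exact ⟨c, i, D i, hD i, hDfin i, hi⟩

theorem not_nonempty_interior_of_finite_sections [Finite α] [Finite β]
    (hcard : Nat.card α < Nat.card β) {G : Set (α ⊕ β → ℝ)} (hG : S.DefSet G)
    (hfin : ∀ u, {v | Sum.elim u v ∈ G}.Finite) :
    ¬ (interior {v | ∃ u, Sum.elim u v ∈ G}).Nonempty := by
  induction β using Finite.induction_empty_option generalizing α with
  | of_equiv e ih =>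
    rw [← nonempty_interior_reindex_iff e.symm]
    have hreindex (u : α → ℝ) (w) :
        Sum.elim u (fun i => w (e.symm i)) = fun j => Sum.elim u w (j.map id e.symm) := by
      funext j; cases j <;> rfl
    simp only [mem_ofPred_eq, hreindex] at hfin ⊢
    refine ih (by rwa [Nat.card_congr e])
      (G := {w | (fun j => w (Sum.map id e.symm j)) ∈ G}) (DefPred.reindex hG _) fun u => ?_
    refine Finite.of_injOn (f := fun w i => w (e.symm i)) (fun w hw => ?_)
      (fun w _ w' _ hww => funext fun b => by simpa using congrFun hww (e b)) (hfin u)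
    rwa [mem_ofPred_eq, hreindex]
  | h_empty => simp at hcard
  | @h_option β _ ih =>
    intro h
    obtain ⟨c, i, D, hD, hDfin, hi⟩ := exists_finiteInDirection_section hG hfin h
    have hcard' : Nat.card {a // a ≠ i} < Nat.card β := by
      have hlt := Finite.card_subtype_lt (p := (· ≠ i)) (not_not.2 rfl)
      rw [Finite.card_option] at hcard
      omega
    refine ih hcard' (G := {w : {a // a ≠ i} ⊕ β → ℝ | ∃ y : α → ℝ,
        (y ∈ D ∧ ∀ a : {a // a ≠ i}, y a = w (Sum.inl a)) ∧
        Sum.elim y (snoc (fun b => w (Sum.inr b)) c) ∈ G})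
      definability (finite_section_of_finiteInDirection hDfin hfin c)
      (hi.mono <| interior_mono ?_)
    rintro v ⟨y, hy, hyv⟩
    exact ⟨fun a => y a, y, ⟨hy, fun _ => rfl⟩, hyv⟩

/-! ### Shears making fibres finite -/

/-- The polynomial curve in `t` without constant term whose `i`-th coordinate has the coefficients
`v (i, k)`. -/
noncomputable abbrev polyCurve {K : ℕ} (v : α × Fin K → ℝ) (t : ℝ) (i : α) : ℝ :=
  ∑ k : Fin K, v (i, k) * t ^ ((k : ℕ) + 1)

theorem eq_of_add_polyCurve_eq {K : ℕ} {t : Fin (K + 1) → ℝ} (ht : Function.Injective t)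
    {x x' : α → ℝ} {v v' : α × Fin K → ℝ}
    (h : ∀ j i, x i + polyCurve v (t j) i = x' i + polyCurve v' (t j) i) : v = v' := by
  funext ⟨i, k⟩
  have hzero := Matrix.eq_zero_of_forall_index_sum_pow_mul_eq_zero (f := t)
    (v := Fin.cons (x i - x' i) fun k => v (i, k) - v' (i, k)) ht fun j => by
      rw [Fin.sum_univ_succ]
      simp only [Fin.val_zero, pow_zero, Fin.cons_zero, one_mul, Fin.val_succ, Fin.cons_succ,
        mul_sub, Finset.sum_sub_distrib, mul_comm _ (v _), mul_comm _ (v' _)]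
      linarith [h j i]
  simpa [sub_eq_zero] using congrFun hzero k.succ

/-- By interpolation a curve `x + polyCurve v` is determined by its values at `K + 1` nodes, and
membership in `D j` leaves only finitely many choices for one coordinate at each node. So the
curves depend on fewer free parameters than `v` has coordinates. -/
theorem not_nonempty_interior_polyCurve_mem [Finite α] [Nonempty α] {K : ℕ} (hK : Nat.card α ≤ K)
    {t : Fin (K + 1) → ℝ} (ht : Function.Injective t) {D : Fin (K + 1) → Set (α → ℝ)}
    {σ : Fin (K + 1) → α} (hD : ∀ j, S.DefSet (D j)) (hfin : ∀ j, FiniteInDirection (σ j) (D j)) :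
    ¬ (interior {v : α × Fin K → ℝ | ∃ x : α → ℝ, ∀ j,
      (fun i => x i + polyCurve v (t j) i) ∈ D j}).Nonempty := by
  let U := Σ j, {a // a ≠ σ j}
  have hcard : Nat.card U < Nat.card (α × Fin K) := by
    cases nonempty_fintype α
    classical
    simp only [U, Nat.card_eq_fintype_card, Fintype.card_sigma, Fintype.card_subtype_compl,
      Fintype.card_unique, Finset.sum_const, Finset.card_univ, Fintype.card_fin,
      Fintype.card_prod, smul_eq_mul] at hK ⊢
    obtain ⟨m, hm⟩ := Nat.exists_eq_succ_of_ne_zero (Fintype.card_ne_zero (α := α))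
    rw [hm, Nat.succ_sub_one]
    nlinarith
  refine mt (Nonempty.mono <| interior_mono ?_) (not_nonempty_interior_of_finite_sections (S := S)
    hcard
    (G := {w : U ⊕ (α × Fin K) → ℝ | ∃ x : α → ℝ, ∀ j,
      (fun i => x i + polyCurve (fun q => w (Sum.inr q)) (t j) i) ∈ D j ∧ ∀ a : {a // a ≠ σ j},
        x a + polyCurve (fun q => w (Sum.inr q)) (t j) a = w (Sum.inl ⟨j, a⟩)})
    definability fun u => ?_)
  · rintro v ⟨x, hx⟩
    exact ⟨fun p => x p.2 + polyCurve v (t p.1) p.2, x, fun j => ⟨hx j, fun _ => rfl⟩⟩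
  · refine ((Finite.pi fun j => hfin j fun a => u ⟨j, a⟩).biUnion
      (t := fun y => {v : α × Fin K → ℝ | ∃ x : α → ℝ, ∀ j i,
        x i + polyCurve v (t j) i = y j i}) fun y _ => ?_).subset ?_
    · refine Set.Subsingleton.finite ?_
      rintro v ⟨x, hx⟩ v' ⟨x', hx'⟩
      exact eq_of_add_polyCurve_eq ht fun j i => (hx j i).trans (hx' j i).symm
    · rintro v ⟨x, hx⟩
      exact mem_biUnion (x := fun j i => x i + polyCurve v (t j) i) (fun j _ => hx j)
        ⟨x, fun _ _ => rfl⟩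

theorem not_nonempty_interior_polyCurve_mem_slice [Finite α] {K : ℕ} (hK : Nat.card α ≤ K)
    {t : Fin (K + 1) → ℝ} (ht : Function.Injective t) {F : Set (Option α → ℝ)} (hF : S.DefSet F)
    (h : ∀ j, ¬ (interior {x | snoc x (t j) ∈ F}).Nonempty) :
    ¬ (interior {v : α × Fin K → ℝ | ∃ x : α → ℝ, ∀ j,
      snoc (fun i => x i + polyCurve v (t j) i) (t j) ∈ F}).Nonempty := by
  choose D hD hfin hcover using fun j => exists_cover_finiteInDirection
    (definability : S.DefPred fun x => snoc x (t j) ∈ F) (h j)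
  intro hinterior
  have (σ : Fin (K + 1) → α) (j) : S.DefSet (D j (σ j)) := hD j (σ j)
  obtain ⟨σ, hσ⟩ := exists_nonempty_interior_of_iUnion (S := S)
    (A := fun σ : Fin (K + 1) → α => {v : α × Fin K → ℝ | ∃ x : α → ℝ, ∀ j,
      (fun i => x i + polyCurve v (t j) i) ∈ D j (σ j)})
    (fun σ => definability (P := fun v : α × Fin K → ℝ => ∃ x : α → ℝ, ∀ j,
      (fun i => x i + polyCurve v (t j) i) ∈ D j (σ j)))
    (hinterior.mono <| interior_mono <| by
      rintro v ⟨x, hx⟩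
      choose σ hσ using fun j => hcover j _ (hx j)
      exact mem_iUnion.2 ⟨σ, x, hσ⟩)
  have : Nonempty α := ⟨σ 0⟩
  exact not_nonempty_interior_polyCurve_mem hK ht (fun j => hD j (σ j))
    (fun j => hfin j (σ j)) hσ

theorem exists_translate_finite_fiber [Finite α] {F : Set (Option α → ℝ)} (hF : S.DefSet F)
    (h : ¬ (interior F).Nonempty) :
    ∃ P : ℝ → α → ℝ, Continuous P ∧ (∀ i, S.DefFun fun w : Unit → ℝ => P (w ()) i) ∧
      ∀ x : α → ℝ, {t | snoc (x + P t) t ∈ F}.Finite := by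
  by_contra! hcon
  let K := Nat.card α
  obtain ⟨⟨a, b⟩, hab⟩ := exists_nonempty_interior_of_iUnion (S := S) (ι := ℚ × ℚ)
    (A := fun p => {v : α × Fin K → ℝ | p.1 < p.2 ∧ ∃ x : α → ℝ, ∀ t : ℝ, (p.1 : ℝ) < t →
      t < p.2 → snoc (fun i => x i + polyCurve v t i) t ∈ F})
    (fun p => definability (P := fun v : α × Fin K → ℝ => p.1 < p.2 ∧ ∃ x : α → ℝ, ∀ t : ℝ,
      (p.1 : ℝ) < t → t < p.2 → snoc (fun i => x i + polyCurve v t i) t ∈ F))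
    (by
      refine ⟨0, mem_interior_iff_mem_nhds.2 (univ_mem' fun v => ?_)⟩
      obtain ⟨x, hx⟩ := hcon (polyCurve v) (by fun_prop) fun i =>
        DefFun.sum _ fun k => (DefFun.const _).mul ((DefFun.coord _).pow _)
      obtain ⟨a, b, hab, hsub⟩ := exists_rat_Ioo_subset_of_infinite
        (definability : S.DefPred fun w : Unit → ℝ =>
          snoc (fun i => x i + polyCurve v (w ()) i) (w ()) ∈ F) hx
      exact mem_iUnion.2 ⟨(a, b), hab, x, fun t hat htb => hsub ⟨hat, htb⟩⟩)
  have hlt : (a : ℝ) < b := Rat.cast_lt.2 (interior_subset hab.some_mem).1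
  have hinf : (Ioo (a : ℝ) b \ {t | (interior {x | snoc x t ∈ F}).Nonempty}).Infinite :=
    (Ioo_infinite hlt).sdiff (finite_nonempty_interior_slice hF h)
  let t (j : Fin (K + 1)) := hinf.natEmbedding _ (j : ℕ)
  have ht : Function.Injective fun j => (t j : ℝ) := fun j j' hj =>
    Fin.ext ((hinf.natEmbedding _).injective (Subtype.ext hj))
  refine not_nonempty_interior_polyCurve_mem_slice le_rfl ht hF (fun j => (t j).2.2) (hab.mono <|
    interior_mono ?_)
  rintro v ⟨_, x, hx⟩
  exact ⟨x, fun j => hx _ (t j).2.1.1 (t j).2.1.2⟩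

/-! ### Uniform finiteness -/

/-- The points of a finite set of reals enumerated downwards, starting with its maximum. The value
is junk as soon as the index reaches the number of points. -/
noncomputable def nthLargest (A : Set ℝ) : ℕ → ℝ
  | 0 => sSup A
  | i + 1 => sSup (A ∩ Iio (nthLargest A i))

theorem nthLargest_ncard_inter_Ioi {A : Set ℝ} (hA : A.Finite) {y : ℝ} (hy : y ∈ A) :
    nthLargest A (A ∩ Ioi y).ncard = y := by
  generalize hi : (A ∩ Ioi y).ncard = i
  induction i generalizing y with
  | zero =>
    have hempty := (ncard_eq_zero (hA.inter_of_left _)).1 hi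
    exact IsGreatest.csSup_eq ⟨hy, fun z hz => not_lt.1 fun h =>
      (hempty.subset ⟨hz, h⟩ : z ∈ (∅ : Set ℝ))⟩
  | succ i ih =>
    obtain ⟨z, ⟨hz, hyz⟩, hmin⟩ := exists_min_image (A ∩ Ioi y) id (hA.inter_of_left _)
      (nonempty_of_ncard_ne_zero (by omega))
    have hinsert : A ∩ Ioi y = insert z (A ∩ Ioi z) := by
      ext u
      refine ⟨fun hu => (hmin u hu).eq_or_lt.imp Eq.symm fun h => ⟨hu.1, h⟩, ?_⟩
      rintro (rfl | hu)
      exacts [⟨hz, hyz⟩, ⟨hu.1, (mem_Ioi.1 hyz).trans hu.2⟩]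
    rw [hinsert, ncard_insert_of_notMem (by simp) (hA.inter_of_left _), Nat.succ_inj] at hi
    rw [nthLargest, ih hz hi]
    exact IsGreatest.csSup_eq ⟨⟨hy, hyz⟩, fun u hu => not_lt.1 fun h =>
      (hmin u ⟨hu.1, h⟩).not_gt hu.2⟩

theorem exists_nthLargest_eq {A : Set ℝ} (hA : A.Finite) {y : ℝ} (hy : y ∈ A) :
    ∃ i < A.ncard, nthLargest A i = y :=
  ⟨_, ncard_lt_ncard ⟨inter_subset_left, fun h => lt_irrefl y (h hy).2⟩ hA,
    nthLargest_ncard_inter_Ioi hA hy⟩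

theorem range_nthLargest {A : Set ℝ} (hA : A.Finite) :
    range (fun i : Fin A.ncard => nthLargest A i) = A := by
  refine (eq_of_subset_of_ncard_le (fun y hy => ?_) ?_ (finite_range _)).symm
  · obtain ⟨i, hi, rfl⟩ := exists_nthLargest_eq hA hy
    exact ⟨⟨i, hi⟩, rfl⟩
  · simpa [image_univ] using
      ncard_image_le (f := fun i : Fin A.ncard => nthLargest A i) finite_univ

theorem injective_nthLargest {A : Set ℝ} (hA : A.Finite) :
    Function.Injective fun i : Fin A.ncard => nthLargest A i := by
  rw [← injOn_univ]
  refine injOn_of_ncard_image_eq ?_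
  rw [image_univ, range_nthLargest hA, ncard_univ, Nat.card_fin]

theorem DefFun.nthLargest_fiber [Finite α] {F : Set (Option α → ℝ)} (hF : S.DefSet F) (i : ℕ) :
    S.DefFun fun x => nthLargest (fiber F x) i := by
  induction i with
  | zero => exact DefFun.sSup_fiber hF
  | succ i ih =>
    exact DefFun.sSup (P := fun x t => snoc x t ∈ F ∧ t < nthLargest (fiber F x) i)
      (.and (.mem hF (.snoc_apply (fun _ => .coord _) (.coord _)))
        (.lt (.coord _) (ih.comp (e := init) fun _ => .coord _)))

/-- Every point of `A` has exactly one point of `B` at distance less than `ε`, and conversely: a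
first-order condition forcing `A` and `B` to have the same number of points. -/
def IsMatching (A B : Set ℝ) (ε : ℝ) : Prop :=
  (∀ y ∈ A, ∃! y', y' ∈ B ∧ |y - y'| < ε) ∧ ∀ y' ∈ B, ∃! y, y ∈ A ∧ |y - y'| < ε

theorem IsMatching.ncard_eq {A B : Set ℝ} {ε : ℝ} (h : IsMatching A B ε) : A.ncard = B.ncard := by
  choose f hf hunique using h.1
  refine ncard_congr f (fun y hy => (hf y hy).1) (fun y z hy hz hyz => ?_) fun y' hy' => ?_
  · exact (h.2 _ (hf y hy).1).unique ⟨hy, (hf y hy).2⟩ ⟨hz, hyz ▸ (hf z hz).2⟩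
  · obtain ⟨y, hy, -⟩ := h.2 y' hy'
    exact ⟨y, hy.1, (hunique y hy.1 y' ⟨hy', hy.2⟩).symm⟩

theorem isMatching_range {ι : Type*} {ξ ξ' : ι → ℝ} {ε : ℝ}
    (hgap : Pairwise fun i j => 2 * ε ≤ |ξ i - ξ j|) (hclose : ∀ i, |ξ i - ξ' i| < ε) :
    IsMatching (range ξ) (range ξ') ε := by
  have heq (i j) (h : |ξ i - ξ' j| < ε) : i = j := by
    by_contra hij
    have := abs_sub_le (ξ i) (ξ' j) (ξ j)
    linarith [hgap hij, hclose j, abs_sub_comm (ξ j) (ξ' j)]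
  constructor
  · rintro _ ⟨i, rfl⟩
    refine ⟨ξ' i, ⟨⟨i, rfl⟩, hclose i⟩, ?_⟩
    rintro _ ⟨⟨j, rfl⟩, hj⟩
    rw [heq i j hj]
  · rintro _ ⟨i, rfl⟩
    refine ⟨ξ i, ⟨⟨i, rfl⟩, hclose i⟩, ?_⟩
    rintro _ ⟨⟨j, rfl⟩, hj⟩
    rw [heq j i hj]

theorem exists_gap {ι : Type*} [Finite ι] {ξ : ι → ℝ} (hξ : Function.Injective ξ) :
    ∃ ε > 0, Pairwise fun i j => 2 * ε ≤ |ξ i - ξ j| := by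
  obtain ⟨ε, hε, hgap⟩ := Pi.exists_forall_pos_add_lt (ι := {p : ι × ι // p.1 ≠ p.2})
    (x := fun _ => 0) (y := fun p => |ξ p.1.1 - ξ p.1.2|)
    fun p => abs_pos.2 (sub_ne_zero.2 (hξ.ne p.2))
  exact ⟨ε / 2, half_pos hε, fun i j hij => by linarith [hgap ⟨(i, j), hij⟩]⟩

/-- The set of points `p` such that the fibres of `F` over points near `p` on the vertical line
through `p` stay matched with the fibre over `p`. -/
def locallyMatched (F : Set (Option (Option α) → ℝ)) : Set (Option α → ℝ) :=
  {p | ∃ ε > 0, ∃ δ > 0, ∀ t, |t - p none| < δ →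
    IsMatching (fiber F p) (fiber F (snoc (init p) t)) ε}

theorem defSet_locallyMatched [Finite α] {F : Set (Option (Option α) → ℝ)} (hF : S.DefSet F) :
    S.DefSet (locallyMatched F) :=
  (definability : S.DefPred fun p : Option α → ℝ => ∃ ε : ℝ, 0 < ε ∧ ∃ δ : ℝ, 0 < δ ∧ ∀ t,
    |t - p none| < δ →
    (∀ y, snoc p y ∈ F → ∃ y', (snoc (snoc (init p) t) y' ∈ F ∧ |y - y'| < ε) ∧
      ∀ z, (snoc (snoc (init p) t) z ∈ F ∧ |y - z| < ε) → z = y') ∧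
    ∀ y', snoc (snoc (init p) t) y' ∈ F → ∃ y, (snoc p y ∈ F ∧ |y - y'| < ε) ∧
      ∀ z, (snoc p z ∈ F ∧ |z - y'| < ε) → z = y).congr fun _ => Iff.rfl

theorem ncard_fiber_eq_of_uIcc_subset {F : Set (Option (Option α) → ℝ)} {x : α → ℝ} {s t : ℝ}
    (h : ∀ r ∈ uIcc s t, snoc x r ∈ locallyMatched F) :
    (fiber F (snoc x s)).ncard = (fiber F (snoc x t)).ncard := by
  refine isPreconnected_uIcc.constant (f := fun r => (fiber F (snoc x r)).ncard) (fun r hr => ?_)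
    left_mem_uIcc right_mem_uIcc
  obtain ⟨ε, -, δ, hδ, hmatch⟩ := h r hr
  refine (continuousAt_const.congr (f := fun _ => (fiber F (snoc x r)).ncard) ?_).continuousWithinAt
  filter_upwards [Metric.ball_mem_nhds r hδ] with s hs
  exact (hmatch s hs).ncard_eq

theorem ncard_eq_iff_nthLargest {A : Set ℝ} {n : ℕ} (hA : A.Finite) :
    A.ncard = n ↔ (A = range fun i : Fin n => nthLargest A i) ∧
      Function.Injective fun i : Fin n => nthLargest A i := by
  refine ⟨?_, fun ⟨hrange, hinj⟩ => ?_⟩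
  · rintro rfl
    exact ⟨(range_nthLargest hA).symm, injective_nthLargest hA⟩
  · rw [hrange, ← image_univ, ncard_image_of_injective _ hinj, ncard_univ, Nat.card_fin]

theorem defSet_ncard_fiber_eq [Finite α] {F : Set (Option α → ℝ)} (hF : S.DefSet F)
    (hfin : ∀ x, (fiber F x).Finite) (n : ℕ) : S.DefSet {x | (fiber F x).ncard = n} := by
  have hnth (i : Fin n) := DefFun.nthLargest_fiber hF i
  refine DefPred.congr (P := fun x =>
    (∀ t, (snoc x t ∈ F ↔ ∃ i : Fin n, nthLargest (fiber F x) i = t)) ∧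
      ∀ i j : Fin n, nthLargest (fiber F x) i = nthLargest (fiber F x) j → i = j) (.and ?_ ?_)
    fun x => ((ncard_eq_iff_nthLargest (hfin x)).trans (and_congr_left' Set.ext_iff)).symm
  · exact .forall_real (.iff (.mem hF (.snoc_apply (fun _ => .coord _) (.coord _)))
      (.exists_finite fun i => .eq ((hnth i).comp (e := init) fun _ => .coord _) (.coord _)))
  · exact .forall_finite fun i => .forall_finite fun j => .imp (.eq (hnth i) (hnth j)) (.const _)

theorem exists_mem_interior_forall_continuousAt [Finite α] {ι : Type*} [Finite ι]
    {f : ι → (α → ℝ) → ℝ} (hf : ∀ i, S.DefFun (f i)) {A : Set (α → ℝ)}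
    (hA : (interior A).Nonempty) :
    ∃ x ∈ interior A, ∀ i, ContinuousAt (f i) x := by
  by_contra! hcon
  obtain ⟨i, hi⟩ := exists_nonempty_interior_of_iUnion (A := fun i => {x | ¬ ContinuousAt (f i) x})
    (fun i => DefPred.not (defSet_continuousAt (hf i)))
    (hA.mono (interior_maximal (fun x hx => mem_iUnion.2 (hcon x hx)) isOpen_interior))
  exact not_nonempty_interior_not_continuousAt (hf i) hi

theorem exists_snoc_mem_locallyMatched [Finite α] {F : Set (Option (Option α) → ℝ)}
    (hF : S.DefSet F) (hfin : ∀ p, (fiber F p).Finite) (x : α → ℝ) {a b : ℝ} (hab : a < b) :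
    ∃ t ∈ Ioo a b, snoc x t ∈ locallyMatched F := by
  let A (n : ℕ) : Set (Unit → ℝ) := {w | w () ∈ Ioo a b ∧ (fiber F (snoc x (w ()))).ncard = n}
  have hA (n) : S.DefSet (A n) := by
    have := defSet_ncard_fiber_eq hF hfin n
    exact definability (P := fun w : Unit → ℝ =>
      (a < w () ∧ w () < b) ∧ snoc x (w ()) ∈ {p | (fiber F p).ncard = n})
  obtain ⟨t, ht⟩ := nonempty_Ioo.2 hab
  obtain ⟨n, hn⟩ := exists_nonempty_interior_of_iUnion hA ⟨fun _ => t,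
    mem_interior_iff_mem_nhds.2 (mem_of_superset
      ((continuous_apply (A := fun _ : Unit => ℝ) ()).continuousAt (Ioo_mem_nhds ht.1 ht.2))
      fun w hw => mem_iUnion.2 ⟨_, hw, rfl⟩)⟩
  let ξ (i : Fin n) (w : Unit → ℝ) := nthLargest (fiber F (snoc x (w ()))) i
  obtain ⟨w, hw, hcont⟩ := exists_mem_interior_forall_continuousAt (f := ξ) (fun i =>
    (DefFun.nthLargest_fiber hF i).comp (.snoc_apply (fun _ => .const _) (.coord _))) hn
  have hξ (v) (hv : v ∈ A n) := (ncard_eq_iff_nthLargest (hfin (snoc x (v ())))).1 hv.2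
  obtain ⟨ε, hε, hgap⟩ := exists_gap (hξ w (interior_subset hw)).2
  obtain ⟨δ, hδ, hnear⟩ := mem_nhds_pi_iff.1 (inter_mem (isOpen_interior.mem_nhds hw)
    (eventually_all.2 fun i => Metric.tendsto_nhds.1 (hcont i) ε hε))
  refine ⟨w (), (interior_subset hw).1, ε, hε, δ, hδ, fun s hs => ?_⟩
  obtain ⟨hsA, hclose⟩ := hnear (fun _ => s) fun _ => hs
  rw [init_snoc, (hξ w (interior_subset hw)).1, (hξ _ (interior_subset hsA)).1]
  exact isMatching_range hgap fun i => (abs_sub_comm _ _).trans_lt (hclose i)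

theorem finite_fiber_compl_locallyMatched [Finite α] {F : Set (Option (Option α) → ℝ)}
    (hF : S.DefSet F) (hfin : ∀ p, (fiber F p).Finite) (x : α → ℝ) :
    (fiber (locallyMatched F)ᶜ x).Finite := by
  by_contra hinf
  obtain ⟨a, b, hab, hsub⟩ :=
    (infinite_fiber_iff (defSet_compl (defSet_locallyMatched hF)) x).1 hinf
  obtain ⟨t, ht, htF⟩ := exists_snoc_mem_locallyMatched hF hfin x hab
  exact hsub ht htF

/-- A set meeting all components of the complement of a finite set `B`, and containing `B`. -/
def gapPoints (B : Set ℝ) : Set ℝ :=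
  {r | r = 0 ∨ ∃ b ∈ B, r = b + 1 ∨ r = b - 1 ∨ ∃ b' ∈ B, r = (b + b') / 2}

theorem finite_gapPoints {B : Set ℝ} (hB : B.Finite) : (gapPoints B).Finite := by
  refine ((finite_singleton 0).union (hB.biUnion (t := fun b =>
    {b + 1, b - 1} ∪ (fun b' => (b + b') / 2) '' B) fun b _ =>
      (toFinite _).union (hB.image _))).subset ?_
  rintro r (rfl | ⟨b, hb, hr⟩)
  · exact Or.inl rfl
  · refine Or.inr (mem_biUnion hb ?_)
    rcases hr with rfl | rfl | ⟨b', hb', rfl⟩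
    exacts [Or.inl (Or.inl rfl), Or.inl (Or.inr rfl), Or.inr ⟨b', hb', rfl⟩]

theorem exists_gapPoint {B : Set ℝ} (hB : B.Finite) (t : ℝ) :
    ∃ r ∈ gapPoints B, r = t ∨ Disjoint (uIcc t r) B := by
  by_cases ht : t ∈ B
  · exact ⟨t, Or.inr ⟨t, ht, Or.inr (Or.inr ⟨t, ht, by ring⟩)⟩, Or.inl rfl⟩
  suffices ∃ r ∈ gapPoints B, ∃ C : Set ℝ, C.OrdConnected ∧ t ∈ C ∧ r ∈ C ∧
      ∀ b ∈ B, b ≠ t → b ∉ C by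
    obtain ⟨r, hr, C, hC, htC, hrC, hBC⟩ := this
    exact ⟨r, hr, Or.inr (disjoint_left.2 fun b hbC hb =>
      hBC b hb (ne_of_mem_of_not_mem hb ht) (hC.uIcc_subset htC hrC hbC))⟩
  rcases (B ∩ Iio t).eq_empty_or_nonempty with hlo | hlo <;>
    rcases (B ∩ Ioi t).eq_empty_or_nonempty with hhi | hhi
  · refine ⟨0, Or.inl rfl, univ, ordConnected_univ, mem_univ _, mem_univ _, fun b hb hbt _ => ?_⟩
    rcases hbt.lt_or_gt with h | h
    exacts [(hlo.subset ⟨hb, h⟩ : b ∈ (∅ : Set ℝ)), (hhi.subset ⟨hb, h⟩ : b ∈ (∅ : Set ℝ))]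
  · obtain ⟨c, hc, hmin⟩ := exists_min_image _ id (hB.inter_of_left _) hhi
    refine ⟨c - 1, Or.inr ⟨c, hc.1, Or.inr (Or.inl rfl)⟩, Iio c, ordConnected_Iio, hc.2,
      sub_one_lt c, fun b hb hbt hbc => ?_⟩
    rcases hbt.lt_or_gt with h | h
    exacts [(hlo.subset ⟨hb, h⟩ : b ∈ (∅ : Set ℝ)), (hmin b ⟨hb, h⟩).not_gt hbc]
  · obtain ⟨c, hc, hmax⟩ := exists_max_image _ id (hB.inter_of_left _) hlo
    refine ⟨c + 1, Or.inr ⟨c, hc.1, Or.inl rfl⟩, Ioi c, ordConnected_Ioi, hc.2,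
      lt_add_one c, fun b hb hbt hcb => ?_⟩
    rcases hbt.lt_or_gt with h | h
    exacts [(hmax b ⟨hb, h⟩).not_gt hcb, (hhi.subset ⟨hb, h⟩ : b ∈ (∅ : Set ℝ))]
  · obtain ⟨c, hc, hmax⟩ := exists_max_image _ id (hB.inter_of_left _) hlo
    obtain ⟨d, hd, hmin⟩ := exists_min_image _ id (hB.inter_of_left _) hhi
    have hct : c < t := hc.2
    have htd : t < d := hd.2
    refine ⟨(c + d) / 2, Or.inr ⟨c, hc.1, Or.inr (Or.inr ⟨d, hd.1, rfl⟩)⟩, Ioo c d,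
      ordConnected_Ioo, ⟨hct, htd⟩, ⟨by linarith, by linarith⟩, fun b hb hbt hbC => ?_⟩
    rcases hbt.lt_or_gt with h | h
    exacts [(hmax b ⟨hb, h⟩).not_gt hbC.1, (hmin b ⟨hb, h⟩).not_gt hbC.2]

theorem exists_ncard_fiber_le [Finite α] {F : Set (Option α → ℝ)} (hF : S.DefSet F)
    (hfin : ∀ x, (fiber F x).Finite) : ∃ M : ℕ, ∀ x, (fiber F x).ncard ≤ M := by
  induction α using Finite.induction_empty_option with
  | of_equiv e ih =>
    have hsnoc (x t) : (fun o : Option _ => snoc x t (o.map e.symm)) =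
        snoc (fun i => x (e.symm i)) t := by
      funext o; cases o <;> rfl
    let F' : Set (Option _ → ℝ) := {w | (fun o : Option _ => w (o.map e.symm)) ∈ F}
    have hfiber (x) : fiber F' x = fiber F fun i => x (e.symm i) := by
      ext t; rw [mem_fiber, mem_ofPred_eq, hsnoc, mem_fiber]
    obtain ⟨M, hM⟩ := ih (F := F') (DefPred.reindex hF _) fun x => hfiber x ▸ hfin _
    refine ⟨M, fun x => ?_⟩
    have h := hM fun i => x (e i)
    rw [hfiber] at h
    simpa using h
  | h_empty => exact ⟨(fiber F 0).ncard, fun x => by rw [Subsingleton.elim x 0]⟩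
  | @h_option α _ ih =>
    let B := (locallyMatched F)ᶜ
    have hB : S.DefSet B := defSet_compl (defSet_locallyMatched hF)
    have hBfin (x) : (fiber B x).Finite := finite_fiber_compl_locallyMatched hF hfin x
    let R : Set (Option α → ℝ) := {p | p none ∈ gapPoints (fiber B (init p))}
    have hR : S.DefSet R := definability (P := fun p => p none = 0 ∨ ∃ b, snoc (init p) b ∈ B ∧
      (p none = b + 1 ∨ p none = b - 1 ∨ ∃ b', snoc (init p) b' ∈ B ∧ p none = (b + b') / 2))
    have hRfin (x) : (fiber R x).Finite := finite_gapPoints (hBfin x)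
    obtain ⟨M₀, hM₀⟩ := ih hR hRfin
    have hnth (i) := (DefFun.nthLargest_fiber hR i).comp (e := init) fun _ => DefFun.coord _
    choose M hM using fun i => ih
      (F := {q | snoc (snoc (init q) (nthLargest (fiber R (init q)) i)) (q none) ∈ F})
      (DefPred.mem hF (.snoc_apply (.snoc_apply (fun _ => .coord _) (hnth i)) (.coord _)))
      fun x => hfin (snoc x (nthLargest (fiber R x) i))
    refine ⟨∑ i ∈ Finset.range M₀, M i, fun p => ?_⟩
    obtain ⟨r, hr, hpr⟩ := exists_gapPoint (hBfin (init p)) (p none)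
    have hcard : (fiber F p).ncard = (fiber F (snoc (init p) r)).ncard := by
      rcases hpr with rfl | hdisj
      · rw [snoc_init]
      · simpa using ncard_fiber_eq_of_uIcc_subset fun s hs =>
          not_not.1 fun h => disjoint_left.1 hdisj hs h
    obtain ⟨i, hi, rfl⟩ := exists_nthLargest_eq (hRfin (init p)) hr
    exact hcard.trans_le ((hM i (init p)).trans (Finset.single_le_sum
      (fun _ _ => Nat.zero_le _) (Finset.mem_range.2 (hi.trans_le (hM₀ _)))))

/-! ### Piecewise continuity -/

/-- The homeomorphism translating each slice of height `t` by `P t`. -/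
def shear (P : ℝ → α → ℝ) (hP : Continuous P) : (Option α → ℝ) ≃ₜ (Option α → ℝ) where
  toFun w := snoc (init w + P (w none)) (w none)
  invFun w := snoc (init w - P (w none)) (w none)
  left_inv w := by simp
  right_inv w := by simp
  continuous_toFun := continuous_snoc.comp <|
    (continuous_init.add (hP.comp (continuous_apply none))).prodMk (continuous_apply none)
  continuous_invFun := continuous_snoc.comp <|
    (continuous_init.sub (hP.comp (continuous_apply none))).prodMk (continuous_apply none)

section Shear

variable {P : ℝ → α → ℝ} (hP : Continuous P)
  (hPdef : ∀ i, S.DefFun fun w : Unit → ℝ => P (w ()) i) {e : (β → ℝ) → Option α → ℝ}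
  (he : ∀ j, S.DefFun fun w => e w j)

include hPdef he

theorem DefFun.shear_apply (j : Option α) : S.DefFun fun w => shear P hP (e w) j :=
  .snoc_apply (fun i => (he _).add ((hPdef i).comp (e := fun w _ => e w none) fun _ => he _))
    (he _) j

theorem DefFun.shear_symm_apply (j : Option α) : S.DefFun fun w => (shear P hP).symm (e w) j :=
  .snoc_apply (fun i => (he _).sub ((hPdef i).comp (e := fun w _ => e w none) fun _ => he _))
    (he _) j

end Shear

theorem exists_finite_sections [Finite α] {Z : Set (Option α → ℝ)} (hZ : S.DefSet Z)
    (hinterior : ¬ (interior Z).Nonempty) :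
    ∃ (M : ℕ) (base : (Option α → ℝ) → α → ℝ) (ξ : Fin M → (α → ℝ) → Option α → ℝ),
      (∀ j, S.DefFun fun w => base w j) ∧ Continuous base ∧
      (∀ i j, S.DefFun fun x => ξ i x j) ∧ ∀ w ∈ Z, ∃ i, w = ξ i (base w) := by
  obtain ⟨P, hP, hPdef, hfin⟩ := exists_translate_finite_fiber hZ hinterior
  let Y := shear P hP ⁻¹' Z
  have hY : S.DefSet Y := DefPred.mem hZ (DefFun.shear_apply hP hPdef .coord)
  obtain ⟨M, hM⟩ := exists_ncard_fiber_le hY hfin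
  let base (w : Option α → ℝ) : α → ℝ := init ((shear P hP).symm w)
  refine ⟨M, base, fun i x => shear P hP (snoc x (nthLargest (fiber Y x) i)),
    fun j => DefFun.shear_symm_apply hP hPdef .coord _,
    continuous_init.comp (shear P hP).symm.continuous,
    fun i => DefFun.shear_apply hP hPdef (.snoc_apply .coord (DefFun.nthLargest_fiber hY i)),
    fun w hw => ?_⟩
  have hwY : (shear P hP).symm w none ∈ fiber Y (base w) :=
    apply_none_mem_fiber_init.2 <| by simpa [Y] using hw
  obtain ⟨i, hi, heq : nthLargest (fiber Y (base w)) i = _⟩ :=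
    exists_nthLargest_eq (hfin (base w)) hwY
  refine ⟨⟨i, hi.trans_le (hM _)⟩, ?_⟩
  change w = shear P hP (snoc (base w) (nthLargest (fiber Y (base w)) i))
  rw [heq, snoc_init, Homeomorph.apply_symm_apply]

theorem exists_finite_cover_continuousOn [Finite α] {f : (α → ℝ) → ℝ} (hf : S.DefFun f) :
    ∃ (ι : Type) (_ : Finite ι) (X : ι → Set (α → ℝ)), (∀ k, S.DefSet (X k)) ∧
      (∀ x, ∃ k, x ∈ X k) ∧ ∀ k, ContinuousOn f (X k) := by
  induction α using Finite.induction_empty_option with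
  | of_equiv e ih =>
    obtain ⟨ι, hι, X, hX, hcover, hcont⟩ := ih (f := fun w => f fun i => w (e.symm i))
      (DefPred.reindex hf (Option.map e.symm))
    refine ⟨ι, hι, fun k => {w | (fun i => w (e i)) ∈ X k}, fun k => DefPred.reindex (hX k) e,
      fun x => hcover _, fun k => ?_⟩
    have hreindex : Continuous fun (w : _ → ℝ) i => w (e i) :=
      continuous_pi fun i => continuous_apply (e i)
    exact ((hcont k).comp hreindex.continuousOn fun _ hw => hw).congr fun w _ => by simp
  | h_empty =>
    exact ⟨Unit, inferInstance, fun _ => univ, fun _ => DefPred.const True,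
      fun _ => ⟨(), mem_univ _⟩, fun _ => continuous_of_discreteTopology.continuousOn⟩
  | @h_option α _ ih =>
    obtain ⟨M, base, ξ, hbase, hbase_cont, hξ, hsection⟩ := exists_finite_sections
      (defSet_compl (defSet_continuousAt hf)) (not_nonempty_interior_not_continuousAt hf)
    choose ι hι X hX hcover hcont using fun i => ih (hf.comp (hξ i))
    refine ⟨Option (Σ i, ι i), inferInstance, fun o => o.elim {w | ContinuousAt f w}
      fun p => {w | w = ξ p.1 (base w) ∧ base w ∈ X p.1 p.2},
      Option.forall.2 ⟨defSet_continuousAt hf, fun p => ?_⟩, fun w => ?_, Option.forall.2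
      ⟨fun w hw => ContinuousAt.continuousWithinAt hw, fun p => ?_⟩⟩
    · exact (.and (.forall_finite fun j => .eq (.coord j) ((hξ _ j).comp hbase))
        (.mem (hX _ _) hbase) : S.DefPred fun w => (∀ j, w j = ξ p.1 (base w) j) ∧
          base w ∈ X p.1 p.2).congr fun w => and_congr_left' funext_iff.symm
    · by_cases hw : ContinuousAt f w
      · exact ⟨none, hw⟩
      · obtain ⟨i, hi⟩ := hsection w hw
        obtain ⟨k, hk⟩ := hcover i (base w)
        exact ⟨some ⟨i, k⟩, hi, hk⟩
    · exact ((hcont p.1 p.2).comp hbase_cont.continuousOn fun w hw => hw.2).congr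
        fun w hw => congrArg f hw.1

/-! ### A definable Tietze extension -/

theorem continuousWithinAt_mul_of_abs_le_one {X : Type*} [TopologicalSpace X] {r v : X → ℝ}
    {s : Set X} {q : X} (hr : ∀ x, |r x| ≤ 1) (hv : ContinuousWithinAt v s q)
    (h : v q ≠ 0 → ContinuousWithinAt r s q) : ContinuousWithinAt (fun x => r x * v x) s q := by
  by_cases hq : v q = 0
  · have hv0 : Tendsto v (𝓝[s] q) (𝓝 0) := hq ▸ hv
    simpa [ContinuousWithinAt, hq] using bdd_le_mul_tendsto_zero' 1 (.of_forall hr) hv0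
  · exact (h hq).mul hv

theorem continuous_iSup_of_compactSpace {X K : Type*} [TopologicalSpace X] [TopologicalSpace K]
    [CompactSpace K] {g : X → K → ℝ} (hg : Continuous ↿g) : Continuous fun x => ⨆ k, g x k := by
  simpa only [image_univ, sSup_range] using isCompact_univ.continuous_sSup hg

protected theorem DefFun.dist [Fintype β] {e e' : (α → ℝ) → β → ℝ}
    (he : ∀ j, S.DefFun fun w => e w j) (he' : ∀ j, S.DefFun fun w => e' w j) [Finite α] :
    S.DefFun fun w => dist (e w) (e' w) := by
  have hsup : S.DefFun fun w => sSup {t | t ≤ 0 ∧ ∀ j, |e w j - e' w j| ≤ -t} :=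
    .sSup (P := fun w t => t ≤ 0 ∧ ∀ j, |e w j - e' w j| ≤ -t) (.and (.le (.coord _) (.const _))
      (.forall_finite fun j => .le (((he j).comp (e := init) fun _ => .coord _).sub
        ((he' j).comp (e := init) fun _ => .coord _)).abs (DefFun.coord none).neg))
  refine hsup.neg.congr fun w => ?_
  rw [neg_eq_iff_eq_neg]
  refine IsGreatest.csSup_eq ⟨⟨neg_nonpos.2 dist_nonneg, fun j => ?_⟩, fun t ht => ?_⟩
  · simpa [Real.dist_eq] using dist_le_pi_dist (e w) (e' w) j
  · exact le_neg_of_le_neg ((dist_pi_le_iff (neg_nonneg.2 ht.1)).2 ht.2)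

theorem DefFun.iSup_mem [Finite α] [Finite β] {Γ : Set (β → ℝ)} (hΓ : S.DefSet Γ)
    {g : (α → ℝ) → (β → ℝ) → ℝ}
    (hg : S.DefFun fun v : α ⊕ β → ℝ => g (fun i => v (Sum.inl i)) fun j => v (Sum.inr j)) :
    S.DefFun fun x => ⨆ w : Γ, g x w := by
  refine (DefFun.sSup (P := fun x t => ∃ w, w ∈ Γ ∧ g x w = t) ?_).congr fun x => ?_
  · refine .exists_tuple (.and (.mem hΓ fun _ => .coord _) (.eq ?_ (.coord (Sum.inl none))))
    exact hg.comp (e := fun v => Sum.elim (fun i => v (Sum.inl (some i))) fun j => v (Sum.inr j))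
      (Sum.forall.2 ⟨fun _ => .coord _, fun _ => .coord _⟩)
  · exact congrArg sSup (by ext t; simp)

/-- The definable extension, to all of `ℝ^α`, of the function whose graph is the compact set `Γ`:
the largest of the cones `x ↦ w none - ⨆ w', ρ x w w' * |w none - w' none|`, where the ratio
`ρ x w w' = dist x (init w) / (dist x (init w) + dist x (init w'))` vanishes at `x = init w` and is
`1` at `x = init w'`. -/
noncomputable def tietzeExtension [Fintype α] (Γ : Set (Option α → ℝ)) (x : α → ℝ) : ℝ :=
  ⨆ w : Γ, ((w : Option α → ℝ) none - ⨆ w' : Γ, dist x (init w) /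
    (dist x (init w) + dist x (init w')) * |(w : Option α → ℝ) none - (w' : Option α → ℝ) none|)

theorem DefFun.tietzeExtension [Fintype α] {Γ : Set (Option α → ℝ)} (hΓ : S.DefSet Γ) :
    S.DefFun (tietzeExtension Γ) := by
  refine .iSup_mem hΓ (g := fun x w => w none - ⨆ w' : Γ, dist x (init w) /
    (dist x (init w) + dist x (init w')) * |w none - (w' : Option α → ℝ) none|)
    ((DefFun.coord _).sub ?_)
  refine .iSup_mem hΓ (g := fun z w' =>
    dist (fun i => z (Sum.inl i)) (init fun j => z (Sum.inr j)) /
      (dist (fun i => z (Sum.inl i)) (init fun j => z (Sum.inr j)) +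
        dist (fun i => z (Sum.inl i)) (init w')) * |z (Sum.inr none) - w' none|) ?_
  exact .mul (.div (.dist (fun _ => .coord _) fun _ => .coord _)
    (.add (.dist (fun _ => .coord _) fun _ => .coord _)
      (.dist (fun _ => .coord _) fun _ => .coord _))) (.abs (.sub (.coord _) (.coord _)))

theorem dist_div_add_dist_mem_Icc {X : Type*} [PseudoMetricSpace X] (x y z : X) :
    dist x y / (dist x y + dist x z) ∈ Icc (0 : ℝ) 1 :=
  ⟨by positivity, div_le_one_of_le₀ (le_add_of_nonneg_right dist_nonneg) (by positivity)⟩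

theorem continuous_dist_ratio_mul_abs_sub [Fintype α] {Γ : Set (Option α → ℝ)}
    (hΓ : ∀ x, (fiber Γ x).Subsingleton) :
    Continuous fun q : ((α → ℝ) × Γ) × Γ => dist q.1.1 (init q.1.2) /
      (dist q.1.1 (init q.1.2) + dist q.1.1 (init q.2)) *
        |(q.1.2 : Option α → ℝ) none - (q.2 : Option α → ℝ) none| := by
  have hval : Continuous fun w : Γ => (w : Option α → ℝ) none :=
    (continuous_apply none).comp continuous_subtype_val
  have hinit : Continuous fun w : Γ => init (w : Option α → ℝ) :=
    continuous_init.comp continuous_subtype_val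
  have hdist : Continuous fun q : ((α → ℝ) × Γ) × Γ => dist q.1.1 (init q.1.2) :=
    continuous_fst.fst.dist (hinit.comp continuous_fst.snd)
  have hdist' : Continuous fun q : ((α → ℝ) × Γ) × Γ => dist q.1.1 (init q.2) :=
    continuous_fst.fst.dist (hinit.comp continuous_snd)
  refine continuous_iff_continuousAt.2 fun q => continuousWithinAt_univ _ _ |>.1 <|
    continuousWithinAt_mul_of_abs_le_one (fun q => ?_)
      ((hval.comp continuous_fst.snd).sub (hval.comp continuous_snd)).abs.continuousWithinAt
      fun hq => (hdist.continuousAt.div (hdist.add hdist').continuousAt fun h0 => ?_)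
        |>.continuousWithinAt
  · have h := dist_div_add_dist_mem_Icc q.1.1 (init (q.1.2 : Option α → ℝ)) (init q.2)
    exact abs_le.2 ⟨by linarith [h.1], h.2⟩
  · obtain ⟨h1, h2⟩ := (add_eq_zero_iff_of_nonneg dist_nonneg dist_nonneg).1 h0
    have hmem : ∀ w : Γ, dist q.1.1 (init (w : Option α → ℝ)) = 0 →
        (w : Option α → ℝ) none ∈ fiber Γ q.1.1 := fun w hw => by
      rw [dist_eq_zero.1 hw]
      exact apply_none_mem_fiber_init.2 w.2
    exact hq (by simp [hΓ _ (hmem _ h1) (hmem _ h2)])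

theorem continuous_tietzeExtension [Fintype α] {Γ : Set (Option α → ℝ)} (hΓ : IsCompact Γ)
    (hsub : ∀ x, (fiber Γ x).Subsingleton) : Continuous (tietzeExtension Γ) := by
  have := isCompact_iff_compactSpace.1 hΓ
  refine continuous_iSup_of_compactSpace (.sub ?_ ?_)
  · exact (continuous_apply none).comp (continuous_subtype_val.comp continuous_snd)
  · exact continuous_iSup_of_compactSpace
      (g := fun (q : (α → ℝ) × Γ) (w' : Γ) => dist q.1 (init q.2) /
        (dist q.1 (init q.2) + dist q.1 (init w')) *
          |(q.2 : Option α → ℝ) none - (w' : Option α → ℝ) none|)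
      (continuous_dist_ratio_mul_abs_sub hsub)

theorem tietzeExtension_init [Fintype α] {Γ : Set (Option α → ℝ)} (hΓ : IsCompact Γ)
    (hsub : ∀ x, (fiber Γ x).Subsingleton) {v : Option α → ℝ} (hv : v ∈ Γ) :
    tietzeExtension Γ (init v) = v none := by
  have := isCompact_iff_compactSpace.1 hΓ
  have : Nonempty Γ := ⟨⟨v, hv⟩⟩
  have hbdd (w : Γ) : BddAbove (range fun w' : Γ => dist (init v) (init w) /
      (dist (init v) (init w) + dist (init v) (init w')) *
        |(w : Option α → ℝ) none - (w' : Option α → ℝ) none|) :=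
    (isCompact_range <| (continuous_dist_ratio_mul_abs_sub hsub).comp
      (Continuous.prodMk_right ((init v, w) : (α → ℝ) × Γ))).bddAbove
  have hle (w : Γ) : (w : Option α → ℝ) none - ⨆ w' : Γ, dist (init v) (init w) /
      (dist (init v) (init w) + dist (init v) (init w')) *
        |(w : Option α → ℝ) none - (w' : Option α → ℝ) none| ≤ v none := by
    refine sub_le_comm.1 (le_trans ?_ (le_ciSup (hbdd w) ⟨v, hv⟩))
    by_cases hw : dist (init v) (init (w : Option α → ℝ)) = 0
    · have hmem : (w : Option α → ℝ) none ∈ fiber Γ (init v) := by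
        rw [dist_eq_zero.1 hw]
        exact apply_none_mem_fiber_init.2 w.2
      simp [hsub _ hmem (apply_none_mem_fiber_init.2 hv)]
    · simpa [hw] using le_abs_self ((w : Option α → ℝ) none - v none)
  refine le_antisymm (ciSup_le hle) (le_ciSup_of_le ⟨v none, forall_mem_range.2 hle⟩ ⟨v, hv⟩ ?_)
  simp

theorem exists_continuous_extension_of_isCompact_graph [Finite α] {Γ : Set (Option α → ℝ)}
    (hdef : S.DefSet Γ) (hΓ : IsCompact Γ) (hsub : ∀ x, (fiber Γ x).Subsingleton) :
    ∃ f : (α → ℝ) → ℝ, S.DefFun f ∧ Continuous f ∧ HasCompactSupport f ∧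
      ∀ w ∈ Γ, f (init w) = w none := by
  cases nonempty_fintype α
  obtain ⟨R, hR⟩ := (hΓ.image continuous_init).isBounded.subset_closedBall 0
  refine ⟨fun x => max 0 (min 1 (R + 1 - dist x 0)) * tietzeExtension Γ x,
    .mul (.max (.const _) (.min (.const _) (.sub (.const _) (.dist (fun _ => .coord _)
      fun _ => .const _)))) (.tietzeExtension hdef),
    .mul (by fun_prop) (continuous_tietzeExtension hΓ hsub),
    .of_support_subset_isCompact (isCompact_closedBall 0 (R + 1)) fun x hx => ?_, fun w hw => ?_⟩
  · by_contra h
    have hlt : R + 1 - dist x 0 ≤ 0 := sub_nonpos.2 (not_le.1 h).le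
    exact hx (by simp only [min_eq_right (hlt.trans zero_le_one), max_eq_left hlt, zero_mul])
  · have h : dist (init w) 0 ≤ R := hR (mem_image_of_mem _ hw)
    simp only [tietzeExtension_init hΓ hsub hw, min_eq_left (show 1 ≤ R + 1 - dist (init w) 0 by
      linarith), max_eq_right zero_le_one, one_mul]

/-! ### Order statistics -/

/-- The `i`-th smallest of the values of the functions `f` at `x`. -/
noncomputable def orderStatistic {m : ℕ} (f : Fin m → (α → ℝ) → ℝ) (i : Fin m) (x : α → ℝ) : ℝ :=
  f (Tuple.sort (fun j => f j x) i) x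

section orderStatistic

variable {m : ℕ} {f : Fin m → (α → ℝ) → ℝ}

theorem monotone_orderStatistic (f : Fin m → (α → ℝ) → ℝ) (x : α → ℝ) :
    Monotone fun i => orderStatistic f i x :=
  Tuple.monotone_sort fun j => f j x

theorem exists_orderStatistic_eq (f : Fin m → (α → ℝ) → ℝ) (j : Fin m) (x : α → ℝ) :
    ∃ i, orderStatistic f i x = f j x :=
  ⟨(Tuple.sort fun j => f j x).symm j, by simp [orderStatistic]⟩

theorem orderStatistic_eq_of_monotone {σ : Equiv.Perm (Fin m)} {x : α → ℝ}
    (h : Monotone fun i => f (σ i) x) (i : Fin m) : orderStatistic f i x = f (σ i) x :=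
  (congrFun (Tuple.comp_sort_eq_comp_iff_monotone (f := fun j => f j x).2 h) i).symm

theorem DefFun.orderStatistic [Finite α] (hf : ∀ j, S.DefFun (f j)) (i : Fin m) :
    S.DefFun (orderStatistic f i) := by
  refine .of_graph ((DefPred.exists_finite (P := fun (σ : Equiv.Perm (Fin m)) v =>
    (∀ i j, i ≤ j → f (σ i) (init v) ≤ f (σ j) (init v)) ∧ v none = f (σ i) (init v))
    fun σ => ?_).congr fun v => ⟨?_, fun h => ⟨Tuple.sort fun j => f j (init v),
      monotone_orderStatistic f (init v), h⟩⟩)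
  · have hinit (j) : S.DefFun fun v : Option α → ℝ => f j (init v) := (hf j).comp fun _ => .coord _
    exact .and (.forall_finite fun i => .forall_finite fun j => .imp (.const _)
      (.le (hinit _) (hinit _))) (.eq (.coord _) (hinit _))
  · rintro ⟨σ, hσ, h⟩
    rw [h, orderStatistic_eq_of_monotone hσ]

theorem continuous_orderStatistic (hf : ∀ j, Continuous (f j)) (i : Fin m) :
    Continuous (orderStatistic f i) := by
  refine (locallyFinite_of_finite fun σ : Equiv.Perm (Fin m) =>
    {x | Monotone fun i => f (σ i) x}).continuous ?_ (fun σ => ?_) fun σ => ?_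
  · exact iUnion_eq_univ_iff.2 fun x => ⟨_, monotone_orderStatistic f x⟩
  · simp only [Monotone, ofPred_forall]
    exact isClosed_iInter fun i => isClosed_iInter fun j => isClosed_iInter fun _ =>
      isClosed_le (hf _) (hf _)
  · exact (hf (σ i)).continuousOn.congr fun x hx => orderStatistic_eq_of_monotone hx i

theorem hasCompactSupport_orderStatistic (hf : ∀ j, HasCompactSupport (f j)) (i : Fin m) :
    HasCompactSupport (orderStatistic f i) :=
  .intro (isCompact_iUnion hf) fun x hx => image_eq_zero_of_notMem_tsupport
    (f := f (Tuple.sort (fun j => f j x) i)) fun h => hx (mem_iUnion.2 ⟨_, h⟩)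

end orderStatistic

theorem exists_monotone_rearrangement [Finite α] {J : Type*} [Finite J] {f : J → (α → ℝ) → ℝ}
    (hdef : ∀ j, S.DefFun (f j)) (hcont : ∀ j, Continuous (f j))
    (hsupp : ∀ j, HasCompactSupport (f j)) :
    ∃ g : ℕ → (α → ℝ) → ℝ, (∀ i, S.DefFun (g i)) ∧ (∀ i, Continuous (g i)) ∧
      (∀ i, HasCompactSupport (g i)) ∧ (∀ x, Monotone fun i => g i x) ∧
      ∃ n, ∀ j x, ∃ i < n, g i x = f j x := by
  obtain ⟨n, ⟨e⟩⟩ := Finite.exists_equiv_fin J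
  let f' : Fin (n + 1) → (α → ℝ) → ℝ := Fin.cons (fun _ => 0) (f ∘ e.symm)
  refine ⟨fun i => orderStatistic f' ⟨min i n, by omega⟩, fun i => .orderStatistic ?_ _,
    fun i => continuous_orderStatistic ?_ _, fun i => hasCompactSupport_orderStatistic ?_ _,
    fun x i j hij => monotone_orderStatistic f' x (min_le_min_right n hij), n + 1, fun j x => ?_⟩
  · exact Fin.cases (.const 0) fun i => hdef _
  · exact Fin.cases continuous_const fun i => hcont _
  · exact Fin.cases .zero fun i => hsupp _
  · obtain ⟨i, hi⟩ := exists_orderStatistic_eq f' (e j).succ x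
    refine ⟨i, i.2, ?_⟩
    simpa [f', min_eq_left (Nat.lt_succ_iff.1 i.2)] using hi

/-! ### Piecewise linear interpolation -/

/-- The fraction `(s - a) / (b - a)` of the interval `[a, b]` lying below `s`, clamped to `[0, 1]`;
it is `0` when `a = b`. -/
noncomputable def clampRatio (a b s : ℝ) : ℝ := max 0 (min 1 ((s - a) / (b - a)))

/-- The value at `s` of the piecewise linear function sending the knot `u j` to `v j` for `j ≤ m`,
with slope `c` below `u 0` and above `u m`. -/
noncomputable def piecewiseLinear (u v : ℕ → ℝ) (m : ℕ) (c s : ℝ) : ℝ :=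
  v 0 + c * min (s - u 0) 0 +
    ∑ j ∈ Finset.range m, clampRatio (u j) (u (j + 1)) s * (v (j + 1) - v j) + c * max (s - u m) 0

theorem clampRatio_mem_Icc (a b s : ℝ) : clampRatio a b s ∈ Icc 0 1 :=
  ⟨le_max_left _ _, max_le zero_le_one (min_le_left _ _)⟩

theorem clampRatio_of_le {a b s : ℝ} (hab : a ≤ b) (h : s ≤ a) : clampRatio a b s = 0 :=
  max_eq_left ((min_le_right _ _).trans
    (div_nonpos_of_nonpos_of_nonneg (sub_nonpos.2 h) (sub_nonneg.2 hab)))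

theorem clampRatio_of_ge {a b s : ℝ} (hab : a < b) (h : b ≤ s) : clampRatio a b s = 1 := by
  have h1 : 1 ≤ (s - a) / (b - a) := (one_le_div (sub_pos.2 hab)).2 (by linarith)
  rw [clampRatio, min_eq_left h1, max_eq_right zero_le_one]

theorem clampRatio_of_mem_Icc {a b s : ℝ} (h : s ∈ Icc a b) :
    clampRatio a b s = (s - a) / (b - a) := by
  have h1 : (s - a) / (b - a) ≤ 1 :=
    div_le_one_of_le₀ (by linarith [h.2]) (by linarith [h.1, h.2])
  rw [clampRatio, min_eq_right h1,
    max_eq_right (div_nonneg (sub_nonneg.2 h.1) (by linarith [h.1, h.2]))]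

theorem monotone_clampRatio {a b : ℝ} (hab : a ≤ b) : Monotone (clampRatio a b) := fun _ _ h =>
  max_le_max_left _ <| min_le_min_left _ <|
    div_le_div_of_nonneg_right (sub_le_sub_right h a) (sub_nonneg.2 hab)

theorem clampRatio_lt_clampRatio {a b s t : ℝ} (has : a ≤ s) (hsb : s < b) (hst : s < t) :
    clampRatio a b s < clampRatio a b t := by
  have hab : 0 < b - a := by linarith
  refine lt_of_lt_of_le ?_ (monotone_clampRatio (by linarith) (min_le_left t b))
  rw [clampRatio_of_mem_Icc ⟨has, hsb.le⟩,
    clampRatio_of_mem_Icc ⟨has.trans (le_min hst.le hsb.le), min_le_right _ _⟩]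
  gcongr
  exact lt_min hst hsb

theorem clampRatio_mul_sub {a b : ℝ} (hab : a ≤ b) (s : ℝ) :
    clampRatio a b s * (b - a) = max a (min s b) - a := by
  rcases hab.eq_or_lt with rfl | hab
  · simp
  · have h0 : b - a ≠ 0 := (sub_pos.2 hab).ne'
    rw [clampRatio, max_mul_of_nonneg _ _ (sub_pos.2 hab).le,
      min_mul_of_nonneg _ _ (sub_pos.2 hab).le, div_mul_cancel₀ _ h0, zero_mul, one_mul,
      min_sub_sub_right, min_comm b, ← max_sub_sub_right, sub_self]

section piecewiseLinear

variable {u v : ℕ → ℝ} {m : ℕ}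

theorem piecewiseLinear_self (hu : Monotone u) (s : ℝ) : piecewiseLinear u u m 1 s = s := by
  induction m with
  | zero =>
    have h := min_add_max (s - u 0) 0
    simp only [piecewiseLinear, Finset.sum_range_zero]
    linarith
  | succ m ih =>
    have hm := hu m.le_succ
    have h : max (u m) (min s (u (m + 1))) - u m + max (s - u (m + 1)) 0 = max (s - u m) 0 := by
      grind
    rw [piecewiseLinear, Finset.sum_range_succ, clampRatio_mul_sub hm]
    rw [piecewiseLinear] at ih
    linarith

theorem piecewiseLinear_knot (hu : Monotone u) (huv : ∀ j < m, u j = u (j + 1) → v j = v (j + 1))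
    (c : ℝ) {k : ℕ} (hk : k ≤ m) : piecewiseLinear u v m c (u k) = v k := by
  have hsum : ∑ j ∈ Finset.range m, clampRatio (u j) (u (j + 1)) (u k) * (v (j + 1) - v j) =
      ∑ j ∈ Finset.range k, (v (j + 1) - v j) := by
    refine (Finset.sum_subset_zero_on_sdiff (Finset.range_subset_range.2 hk) (fun j hj => ?_)
      fun j hj => ?_).symm
    · have hkj : k ≤ j := by simpa using (Finset.mem_sdiff.1 hj).2
      rw [clampRatio_of_le (hu j.le_succ) (hu hkj), zero_mul]
    · have hjk : j < k := Finset.mem_range.1 hj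
      rcases (hu j.le_succ).eq_or_lt with h | h
      · rw [huv j (by omega) h, sub_self, mul_zero]
      · rw [clampRatio_of_ge h (hu hjk), one_mul]
  rw [piecewiseLinear, hsum, Finset.sum_range_sub, min_eq_right (sub_nonneg.2 (hu k.zero_le)),
    max_eq_right (sub_nonpos.2 (hu hk))]
  ring

theorem exists_mem_Ico_knots {s : ℝ} (h0 : u 0 ≤ s) (hm : s < u m) :
    ∃ j < m, u j ≤ s ∧ s < u (j + 1) := by
  induction m with
  | zero => exact absurd hm h0.not_gt
  | succ m ih =>
    rcases lt_or_ge s (u m) with h | h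
    · obtain ⟨j, hj, hj'⟩ := ih h
      exact ⟨j, hj.trans m.lt_succ_self, hj'⟩
    · exact ⟨m, m.lt_succ_self, h, hm⟩

theorem strictMono_piecewiseLinear (hu : Monotone u) (hv : Monotone v)
    (huv : ∀ j < m, v j = v (j + 1) → u j = u (j + 1)) {c : ℝ} (hc : 0 < c) :
    StrictMono (piecewiseLinear u v m c) := by
  intro s t hst
  have hmin : c * min (s - u 0) 0 ≤ c * min (t - u 0) 0 := by gcongr
  have hmax : c * max (s - u m) 0 ≤ c * max (t - u m) 0 := by gcongr
  have hle (j : ℕ) : clampRatio (u j) (u (j + 1)) s * (v (j + 1) - v j) ≤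
      clampRatio (u j) (u (j + 1)) t * (v (j + 1) - v j) :=
    mul_le_mul_of_nonneg_right (monotone_clampRatio (hu j.le_succ) hst.le)
      (sub_nonneg.2 (hv j.le_succ))
  have hsum := Finset.sum_le_sum fun j (_ : j ∈ Finset.range m) => hle j
  rw [piecewiseLinear, piecewiseLinear]
  rcases lt_or_ge s (u 0) with h0 | h0
  · have : c * min (s - u 0) 0 < c * min (t - u 0) 0 := by
      gcongr
      exact lt_min (by rw [min_eq_left (by linarith)]; linarith)
        (min_lt_of_left_lt (sub_neg.2 h0))
    linarith
  rcases lt_or_ge s (u m) with hm | hm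
  · obtain ⟨j, hj, hj1, hj2⟩ := exists_mem_Ico_knots h0 hm
    have hvj : v j < v (j + 1) := (hv j.le_succ).lt_of_ne fun h => by
      linarith [huv j hj h]
    have := Finset.sum_lt_sum (fun j _ => hle j) ⟨j, Finset.mem_range.2 hj,
      mul_lt_mul_of_pos_right (clampRatio_lt_clampRatio hj1 hj2 hst) (sub_pos.2 hvj)⟩
    linarith
  · have : c * max (s - u m) 0 < c * max (t - u m) 0 := by
      gcongr
      exact max_lt (lt_max_of_lt_left (by linarith)) (lt_max_of_lt_left (by linarith))
    linarith

theorem continuousWithinAt_piecewiseLinear {X : Type*} [TopologicalSpace X] {A : Set X} {q : X}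
    {u v : ℕ → X → ℝ} {c s : X → ℝ} (hu : ∀ j, ContinuousWithinAt (u j) A q)
    (hv : ∀ j, ContinuousWithinAt (v j) A q) (hc : ContinuousWithinAt c A q)
    (hs : ContinuousWithinAt s A q) (huv : ∀ j < m, u j q = u (j + 1) q → v j q = v (j + 1) q) :
    ContinuousWithinAt
      (fun x => piecewiseLinear (fun j => u j x) (fun j => v j x) m (c x) (s x)) A q := by
  refine .add (.add (.add (hv 0) (hc.mul ((hs.sub (hu 0)).min continuousWithinAt_const)))
    (tendsto_finsetSum _ fun j hj => ?_)) (hc.mul ((hs.sub (hu m)).max continuousWithinAt_const))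
  refine continuousWithinAt_mul_of_abs_le_one (fun x => ?_) ((hv (j + 1)).sub (hv j)) fun h => ?_
  · have h := clampRatio_mem_Icc (u j x) (u (j + 1) x) (s x)
    exact abs_le.2 ⟨by linarith [h.1], h.2⟩
  · refine continuousWithinAt_const.max (continuousWithinAt_const.min
      ((hs.sub (hu j)).div ((hu (j + 1)).sub (hu j)) fun h0 => h (sub_eq_zero.2 ?_)))
    exact (huv j (Finset.mem_range.1 hj) (sub_eq_zero.1 h0).symm).symm

theorem DefFun.piecewiseLinear {u v : ℕ → (α → ℝ) → ℝ} {c s : (α → ℝ) → ℝ}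
    (hu : ∀ j, S.DefFun (u j)) (hv : ∀ j, S.DefFun (v j)) (hc : S.DefFun c) (hs : S.DefFun s) :
    S.DefFun fun x => piecewiseLinear (fun j => u j x) (fun j => v j x) m (c x) (s x) :=
  .add (.add (.add (hv 0) (hc.mul (.min (hs.sub (hu 0)) (.const 0))))
    (.sum _ fun j => .mul (.max (.const 0) (.min (.const 1)
      (.div (hs.sub (hu j)) ((hu (j + 1)).sub (hu j))))) ((hv (j + 1)).sub (hv j))))
    (hc.mul (.max (hs.sub (hu m)) (.const 0)))

end piecewiseLinear

/-! ### Stratifications with conic neighbourhoods -/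

section Stratification

variable {ι : Type*} {lab : (α → ℝ) → ι} {l : ι} {p : α → ℝ}

/-- `S.IsConicContraction lab p V H`: the map `H` contracts `V` to the point `p` along definable
curves on which the label `lab` is constant until `p` is reached. -/
structure IsConicContraction (S : OMinimalRealExpansion) (lab : (α → ℝ) → ι) (p : α → ℝ)
    (V : Set (α → ℝ)) (H : (α → ℝ) → ℝ → α → ℝ) : Prop where
  continuousOn : ContinuousOn (fun q : (α → ℝ) × ℝ => H q.1 q.2) (V ×ˢ Icc 0 1)
  apply_base : ∀ t ∈ Icc (0 : ℝ) 1, H p t = p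
  apply_zero : ∀ x ∈ V, H x 0 = x
  apply_one : ∀ x ∈ V, H x 1 = p
  label_eq : ∀ x ∈ V, ∀ t ∈ Ico (0 : ℝ) 1, lab (H x t) = lab x
  defFun : ∀ x ∈ V, ∀ i, S.DefFun fun w : Unit → ℝ => H x (w ()) i

/-- The fibre of `lab` over `l` is locally connected at the point `p`, which may lie outside it. -/
def FiberConnectedAt (lab : (α → ℝ) → ι) (l : ι) (p : α → ℝ) : Prop :=
  ∀ U ∈ 𝓝 p, ∃ V ∈ 𝓝 p, ∃ C, IsPreconnected C ∧ V ∩ lab ⁻¹' {l} ⊆ C ∧ C ⊆ lab ⁻¹' {l} ∩ U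

/-- The labelling `lab` partitions `ℝ^α` into definable strata, its fibres, which are locally
connected at every point of the space and conic near every point of the space. -/
structure IsStratification (S : OMinimalRealExpansion) (lab : (α → ℝ) → ι) : Prop where
  defSet_fiber : ∀ l, S.DefSet {x | lab x = l}
  fiberConnectedAt : ∀ l p, FiberConnectedAt lab l p
  exists_contraction : ∀ p, ∃ V ∈ 𝓝 p, ∃ H, S.IsConicContraction lab p V H

namespace IsConicContraction

variable {V : Set (α → ℝ)} {H : (α → ℝ) → ℝ → α → ℝ}

theorem eventually_forall_mem (h : S.IsConicContraction lab p V H) (hV : V ∈ 𝓝 p)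
    {U : Set (α → ℝ)} (hU : U ∈ 𝓝 p) : ∀ᶠ x in 𝓝 p, ∀ t ∈ Icc (0 : ℝ) 1, H x t ∈ U := by
  refine isCompact_Icc.eventually_forall_of_forall_eventually
    (P := fun x t => t ∈ Icc (0 : ℝ) 1 → H x t ∈ U) (fun t ht => ?_) |>.mono
      fun x hx t ht => hx t ht ht
  have hcont := h.continuousOn (p, t) ⟨mem_of_mem_nhds hV, ht⟩
  have hmem := hcont.preimage_mem_nhdsWithin (by simpa only [h.apply_base t ht] using hU)
  filter_upwards [mem_nhdsWithin_iff_eventually.1 hmem, continuousAt_fst.preimage_mem_nhds hV]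
    with z hz hzV hzt using hz ⟨hzV, hzt⟩

theorem exists_of_label_eq_imp {ι' : Type*} {lab' : (α → ℝ) → ι'}
    (h : S.IsConicContraction lab p V H) (hV : V ∈ 𝓝 p) {U : Set (α → ℝ)} (hU : U ∈ 𝓝 p)
    (hlab : ∀ x ∈ U, ∀ y ∈ U, lab x = lab y → lab' x = lab' y) :
    ∃ V' ∈ 𝓝 p, S.IsConicContraction lab' p V' H := by
  refine ⟨V ∩ {x | ∀ t ∈ Icc (0 : ℝ) 1, H x t ∈ U}, inter_mem hV (h.eventually_forall_mem hV hU),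
    h.continuousOn.mono (prod_mono_left inter_subset_left), h.apply_base,
    fun x hx => h.apply_zero x hx.1, fun x hx => h.apply_one x hx.1, fun x hx t ht => ?_,
    fun x hx => h.defFun x hx.1⟩
  have hxU := hx.2 0 (left_mem_Icc.2 zero_le_one)
  rw [h.apply_zero x hx.1] at hxU
  exact hlab _ (hx.2 t (Ico_subset_Icc_self ht)) x hxU (h.label_eq x hx.1 t ht)

end IsConicContraction

theorem FiberConnectedAt.comap {e : (β → ℝ) ≃ₜ (α → ℝ)} {q : β → ℝ}
    (h : FiberConnectedAt lab l (e q)) : FiberConnectedAt (lab ∘ e) l q := by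
  intro U hU
  obtain ⟨V, hV, C, hC, hVC, hCU⟩ := h (e.symm ⁻¹' U)
    (e.symm.continuous.continuousAt.preimage_mem_nhds (by simpa using hU))
  refine ⟨e ⁻¹' V, e.continuous.continuousAt.preimage_mem_nhds hV, e ⁻¹' C, ?_,
    fun x hx => hVC ⟨hx.1, hx.2⟩, fun x hx => ⟨(hCU hx).1, by simpa using (hCU hx).2⟩⟩
  rwa [e.isPreconnected_preimage]

theorem IsConicContraction.comap [Finite α] {e : (β → ℝ) ≃ₜ (α → ℝ)}
    (he : ∀ j, S.DefFun fun w => e.symm w j) {q : β → ℝ} {V : Set (α → ℝ)}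
    {H : (α → ℝ) → ℝ → α → ℝ} (h : S.IsConicContraction lab (e q) V H) :
    S.IsConicContraction (lab ∘ e) q (e ⁻¹' V) fun x t => e.symm (H (e x) t) where
  continuousOn := e.symm.continuous.comp_continuousOn <|
    h.continuousOn.comp (e.continuous.prodMap continuous_id).continuousOn fun _ hz => ⟨hz.1, hz.2⟩
  apply_base t ht := by rw [h.apply_base t ht, e.symm_apply_apply]
  apply_zero x hx := by rw [h.apply_zero _ hx, e.symm_apply_apply]
  apply_one x hx := by rw [h.apply_one _ hx, e.symm_apply_apply]
  label_eq x hx t ht := by simpa using h.label_eq _ hx t ht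
  defFun x hx j := (he j).comp (h.defFun _ hx)

theorem IsStratification.comap [Finite α] [Finite β] (h : S.IsStratification lab)
    {e : (β → ℝ) ≃ₜ (α → ℝ)} (he : ∀ i, S.DefFun fun w => e w i)
    (he' : ∀ j, S.DefFun fun w => e.symm w j) : S.IsStratification (lab ∘ e) where
  defSet_fiber l := DefPred.subst (P := fun x => lab x = l) (h.defSet_fiber l) he
  fiberConnectedAt l q := (h.fiberConnectedAt l (e q)).comap
  exists_contraction q := by
    obtain ⟨V, hV, H, hH⟩ := h.exists_contraction (e q)
    exact ⟨e ⁻¹' V, e.continuous.continuousAt.preimage_mem_nhds hV, _, hH.comap he'⟩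

/-! ### Lifting a stratification to one more variable -/

/-- The labelling of `ℝ^{Option α}` by the label of the base point and the position of the last
coordinate with respect to each of the first `n` functions `g`. -/
noncomputable def liftLabel (lab : (α → ℝ) → ι) (g : ℕ → (α → ℝ) → ℝ) (n : ℕ)
    (w : Option α → ℝ) : ι × (Fin n → SignType) :=
  (lab (init w), fun i => SignType.sign (w none - g i (init w)))

/-- The order relations between the first `n` functions `g` are constant on each fibre of `lab`. -/
def HasConstantOrder (lab : (α → ℝ) → ι) (g : ℕ → (α → ℝ) → ℝ) (n : ℕ) : Prop :=
  ∀ x y, lab x = lab y → ∀ i < n, ∀ j < n, g i x < g j x → g i y < g j y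

variable {g : ℕ → (α → ℝ) → ℝ} {n : ℕ}

theorem liftLabel_eq_iff {w : Option α → ℝ} {τ : ι × (Fin n → SignType)} :
    liftLabel lab g n w = τ ↔
      lab (init w) = τ.1 ∧ ∀ i : Fin n, SignType.sign (w none - g i (init w)) = τ.2 i := by
  rw [liftLabel, Prod.ext_iff, funext_iff]

theorem liftLabel_eq_iff_of_ne_zero {τ : ι × (Fin n → SignType)} (hτ : ∀ i, τ.2 i ≠ 0)
    {w : Option α → ℝ} : liftLabel lab g n w = τ ↔ lab (init w) = τ.1 ∧
      (∀ i : {i // τ.2 i = 1}, g i (init w) < w none) ∧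
        ∀ i : {i // τ.2 i = -1}, w none < g i (init w) := by
  rw [liftLabel_eq_iff, and_congr_right_iff]
  refine fun _ => ⟨fun h => ⟨fun i => ?_, fun i => ?_⟩, fun h i => ?_⟩
  · exact sub_pos.1 (sign_eq_one_iff.1 ((h i).trans i.2))
  · exact sub_neg.1 (sign_eq_neg_one_iff.1 ((h i).trans i.2))
  · rcases hi : τ.2 i
    · exact absurd hi (hτ i)
    · exact sign_neg (sub_neg.2 (h.2 ⟨i, hi⟩))
    · exact sign_pos (sub_pos.2 (h.1 ⟨i, hi⟩))

theorem HasConstantOrder.lt_iff (h : HasConstantOrder lab g n) {x y : α → ℝ} (hxy : lab x = lab y)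
    {i j : ℕ} (hi : i < n) (hj : j < n) : g i x < g j x ↔ g i y < g j y :=
  ⟨h x y hxy i hi j hj, h y x hxy.symm i hi j hj⟩

theorem HasConstantOrder.sign_sub_eq (h : HasConstantOrder lab g n) {x y : α → ℝ}
    (hxy : lab x = lab y) {i j : ℕ} (hi : i < n) (hj : j < n) :
    SignType.sign (g i x - g j x) = SignType.sign (g i y - g j y) := by
  simp only [sign_apply, sub_pos, sub_neg, h.lt_iff hxy hi hj, h.lt_iff hxy hj hi]

theorem defSet_liftLabel_fiber [Finite α] (hlab : ∀ l, S.DefSet {x | lab x = l})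
    (hg : ∀ i, S.DefFun (g i)) (τ : ι × (Fin n → SignType)) :
    S.DefSet {w | liftLabel lab g n w = τ} := by
  have hinit (i : ℕ) : S.DefFun fun w : Option α → ℝ => g i (init w) :=
    (hg i).comp fun _ => .coord _
  have hsign (i : Fin n) (s : SignType) :
      S.DefPred fun w : Option α → ℝ => SignType.sign (w none - g i (init w)) = s := by
    cases s
    · simpa [sign_eq_zero_iff] using
        DefPred.eq (DefFun.sub (.coord none) (hinit i)) (DefFun.const 0)
    · simpa [sign_eq_neg_one_iff] using
        DefPred.lt (DefFun.sub (.coord none) (hinit i)) (DefFun.const 0)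
    · simpa [sign_eq_one_iff] using
        DefPred.lt (DefFun.const 0) (DefFun.sub (.coord none) (hinit i))
  exact (((DefPred.reindex (hlab τ.1) some).and
    (.forall_finite fun i : Fin n => hsign i (τ.2 i))).congr fun w => liftLabel_eq_iff.symm)

theorem isPreconnected_band {I J : Type*} [Finite I] [Nonempty I] [Finite J] [Nonempty J]
    {lo : I → (α → ℝ) → ℝ} {up : J → (α → ℝ) → ℝ} (hlo : ∀ i, Continuous (lo i))
    (hup : ∀ j, Continuous (up j)) {C : Set (α → ℝ)} (hC : IsPreconnected C)
    (h : ∀ x ∈ C, ∀ i j, lo i x < up j x) :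
    IsPreconnected {w : Option α → ℝ | init w ∈ C ∧ (∀ i, lo i (init w) < w none) ∧
      ∀ j, w none < up j (init w)} := by
  cases nonempty_fintype I
  cases nonempty_fintype J
  let L (x : α → ℝ) : ℝ := Finset.univ.sup' Finset.univ_nonempty fun i => lo i x
  let U (x : α → ℝ) : ℝ := Finset.univ.inf' Finset.univ_nonempty fun j => up j x
  have hL : Continuous L := .finset_sup'_apply _ fun i _ => hlo i
  have hU : Continuous U := .finset_inf'_apply _ fun j _ => hup j
  have hLU (x : α → ℝ) (hx : x ∈ C) : L x < U x := by
    simpa [L, U] using fun j i => h x hx i j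
  let φ (q : (α → ℝ) × ℝ) : Option α → ℝ := snoc q.1 (L q.1 + q.2 * (U q.1 - L q.1))
  have hφ : Continuous φ := continuous_snoc.comp (.prodMk continuous_fst
    ((hL.comp continuous_fst).add (continuous_snd.mul
      ((hU.comp continuous_fst).sub (hL.comp continuous_fst)))))
  convert (hC.prod (isPreconnected_Ioo (a := (0 : ℝ)) (b := 1))).image φ hφ.continuousOn using 1
  ext w
  have hband : ((∀ i, lo i (init w) < w none) ∧ ∀ j, w none < up j (init w)) ↔
      w none ∈ Ioo (L (init w)) (U (init w)) := by simp [L, U]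
  rw [mem_ofPred_eq, hband]
  constructor
  · rintro ⟨hw, hwL, hwU⟩
    have hpos := sub_pos.2 (hLU _ hw)
    refine ⟨(init w, (w none - L (init w)) / (U (init w) - L (init w))), ⟨hw,
      div_pos (by linarith) hpos, (div_lt_one hpos).2 (by linarith)⟩, ?_⟩
    simp only [φ, div_mul_cancel₀ _ hpos.ne', add_sub_cancel, snoc_init]
  · rintro ⟨⟨x, t⟩, ⟨hx, ht0, ht1⟩, rfl⟩
    have hpos := sub_pos.2 (hLU x hx)
    simp only [φ, init_snoc, snoc_none]
    exact ⟨hx, by nlinarith, by nlinarith⟩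

section FiberConnectedAt

variable {w₀ p : Option α → ℝ} {τ : ι × (Fin n → SignType)}

theorem fiberConnectedAt_liftLabel_of_sign_eq_zero (hg : ∀ i, Continuous (g i))
    (hord : HasConstantOrder lab g n) (hlab : FiberConnectedAt lab τ.1 (init p))
    (hw₀ : liftLabel lab g n w₀ = τ) {k : Fin n} (hk : τ.2 k = 0) (hp : p none = g k (init p)) :
    FiberConnectedAt (liftLabel lab g n) τ p := by
  obtain ⟨hl₀, hs₀⟩ := liftLabel_eq_iff.1 hw₀
  have hgraph : Continuous fun x => snoc x (g k x) :=
    continuous_snoc.comp (.prodMk continuous_id (hg k))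
  intro U hU
  obtain ⟨V, hV, C, hC, hVC, hCU⟩ := hlab ((fun x => snoc x (g k x)) ⁻¹' U)
    (hgraph.continuousAt.preimage_mem_nhds (by rwa [← hp, snoc_init]))
  refine ⟨init ⁻¹' V, continuous_init.continuousAt.preimage_mem_nhds hV,
    (fun x => snoc x (g k x)) '' C, hC.image _ hgraph.continuousOn, ?_, ?_⟩
  · rintro w ⟨hwV, hw⟩
    obtain ⟨hl, hs⟩ := liftLabel_eq_iff.1 hw
    have hwk : w none = g k (init w) := sub_eq_zero.1 (sign_eq_zero_iff.1 ((hs k).trans hk))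
    exact ⟨init w, hVC ⟨hwV, hl⟩, by simp only [← hwk, snoc_init]⟩
  · rintro _ ⟨x, hx, rfl⟩
    refine ⟨liftLabel_eq_iff.2 ⟨by simpa using (hCU hx).1, fun i => ?_⟩, (hCU hx).2⟩
    have hwk : w₀ none = g k (init w₀) := sub_eq_zero.1 (sign_eq_zero_iff.1 ((hs₀ k).trans hk))
    simp only [snoc_none, init_snoc, ← hs₀ i, hwk]
    exact hord.sign_sub_eq ((hCU hx).1.trans hl₀.symm) k.2 i.2

theorem eventually_sub_lt_and_lt_add (hg : ∀ i, Continuous (g i))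
    (hlo : ∀ i : Fin n, τ.2 i = 1 → g i (init p) ≤ p none)
    (hup : ∀ i : Fin n, τ.2 i = -1 → p none ≤ g i (init p)) {ε : ℝ} (hε : 0 < ε) :
    ∀ᶠ x in 𝓝 (init p), ∀ i : Fin n, (τ.2 i = 1 → g i x < p none + ε) ∧
      (τ.2 i = -1 → p none - ε < g i x) := by
  refine eventually_all.2 fun i => .and ?_ ?_ <;>
    refine eventually_imp_distrib_left.2 fun hi => ?_
  · exact (hg i).continuousAt.eventually_lt continuousAt_const (by linarith [hlo i hi])
  · exact continuousAt_const.eventually_lt (hg i).continuousAt (by linarith [hup i hi])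

theorem fiberConnectedAt_liftLabel_of_sign_ne_zero (hg : ∀ i, Continuous (g i))
    (hord : HasConstantOrder lab g n) (hlab : FiberConnectedAt lab τ.1 (init p))
    (hw₀ : liftLabel lab g n w₀ = τ) (hτ : ∀ i, τ.2 i ≠ 0)
    (hlo : ∀ i : Fin n, τ.2 i = 1 → g i (init p) ≤ p none)
    (hup : ∀ i : Fin n, τ.2 i = -1 → p none ≤ g i (init p)) :
    FiberConnectedAt (liftLabel lab g n) τ p := by
  obtain ⟨hl₀, hlo₀, hup₀⟩ := (liftLabel_eq_iff_of_ne_zero hτ).1 hw₀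
  intro U hU
  have hU' : (fun q : (α → ℝ) × ℝ => snoc q.1 q.2) ⁻¹' U ∈ 𝓝 (init p, p none) :=
    continuous_snoc.continuousAt.preimage_mem_nhds (by rwa [snoc_init])
  obtain ⟨W, hW, T, hT, hWT⟩ := mem_nhds_prod_iff.1 hU'
  obtain ⟨ε, hε, hεT⟩ := Metric.mem_nhds_iff.1 hT
  rw [Real.ball_eq_Ioo] at hεT
  obtain ⟨V, hV, C, hC, hVC, hCU⟩ :=
    hlab _ (inter_mem hW (eventually_sub_lt_and_lt_add hg hlo hup hε))
  have hband := isPreconnected_band (I := Option {i : Fin n // τ.2 i = 1})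
    (J := Option {i : Fin n // τ.2 i = -1})
    (lo := fun o => o.elim (fun _ => p none - ε) fun i => g i)
    (up := fun o => o.elim (fun _ => p none + ε) fun i => g i)
    (Option.forall.2 ⟨continuous_const, fun i => hg i⟩)
    (Option.forall.2 ⟨continuous_const, fun i => hg i⟩) hC ?_
  · refine ⟨init ⁻¹' V ∩ {w | w none ∈ Ioo (p none - ε) (p none + ε)}, inter_mem
      (continuous_init.continuousAt.preimage_mem_nhds hV) ((continuous_apply none).continuousAt
        (Ioo_mem_nhds (by linarith) (by linarith))), _, hband, ?_, ?_⟩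
    · rintro w ⟨⟨hwV, hwε⟩, hw⟩
      obtain ⟨hl, hwlo, hwup⟩ := (liftLabel_eq_iff_of_ne_zero hτ).1 hw
      exact ⟨hVC ⟨hwV, hl⟩, Option.forall.2 ⟨hwε.1, hwlo⟩, Option.forall.2 ⟨hwε.2, hwup⟩⟩
    · rintro w ⟨hwC, hwlo, hwup⟩
      refine ⟨(liftLabel_eq_iff_of_ne_zero hτ).2 ⟨(hCU hwC).1, fun i => hwlo (some i),
        fun i => hwup (some i)⟩, ?_⟩
      rw [← snoc_init w]
      exact hWT (mk_mem_prod (hCU hwC).2.1 (hεT ⟨hwlo none, hwup none⟩))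
  · refine fun x hx => Option.forall.2 ⟨Option.forall.2 ⟨?_, fun j => ?_⟩, fun i =>
      Option.forall.2 ⟨?_, fun j => ?_⟩⟩
    · exact (sub_lt_self _ hε).trans (lt_add_of_pos_right _ hε)
    · exact ((hCU hx).2.2 j).2 j.2
    · exact ((hCU hx).2.2 i).1 i.2
    · exact hord _ _ (hl₀.trans (hCU hx).1.symm) i i.1.2 j j.1.2 ((hlo₀ i).trans (hup₀ j))

theorem fiberConnectedAt_liftLabel (hg : ∀ i, Continuous (g i)) (hord : HasConstantOrder lab g n)
    (hlab : FiberConnectedAt lab τ.1 (init p)) : FiberConnectedAt (liftLabel lab g n) τ p := by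
  by_cases hp : p ∈ closure (liftLabel lab g n ⁻¹' {τ})
  swap
  · intro U _
    exact ⟨(closure (liftLabel lab g n ⁻¹' {τ}))ᶜ, isClosed_closure.isOpen_compl.mem_nhds hp, ∅,
      isPreconnected_empty, fun w hw => hw.1 (subset_closure hw.2), empty_subset _⟩
  obtain ⟨w₀, hw₀⟩ := closure_nonempty_iff.1 ⟨p, hp⟩
  have hgi (i : Fin n) : Continuous fun w : Option α → ℝ => g i (init w) :=
    (hg i).comp continuous_init
  have hsign (i : Fin n) {w : Option α → ℝ} (hw : w ∈ liftLabel lab g n ⁻¹' {τ}) :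
      SignType.sign (w none - g i (init w)) = τ.2 i := (liftLabel_eq_iff.1 hw).2 i
  have hlo (i : Fin n) (hi : τ.2 i = 1) : g i (init p) ≤ p none :=
    closure_minimal (fun w hw => (sub_pos.1 (sign_eq_one_iff.1 ((hsign i hw).trans hi))).le)
      (isClosed_le (hgi i) (continuous_apply none)) hp
  have hup (i : Fin n) (hi : τ.2 i = -1) : p none ≤ g i (init p) :=
    closure_minimal (fun w hw => (sub_neg.1 (sign_eq_neg_one_iff.1 ((hsign i hw).trans hi))).le)
      (isClosed_le (continuous_apply none) (hgi i)) hp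
  by_cases hτ : ∃ k, τ.2 k = 0
  · obtain ⟨k, hk⟩ := hτ
    refine fiberConnectedAt_liftLabel_of_sign_eq_zero hg hord hlab hw₀ hk ?_
    exact closure_minimal (fun w hw => sub_eq_zero.1 (sign_eq_zero_iff.1 ((hsign k hw).trans hk)))
      (isClosed_eq (continuous_apply none) (hgi k)) hp
  · exact fiberConnectedAt_liftLabel_of_sign_ne_zero hg hord hlab hw₀ (not_exists.1 hτ) hlo hup

end FiberConnectedAt

/-- The lift of the homotopy `H` to one more variable: at time `t` the line over `x` is mapped to
the line over `H x t`, by the piecewise linear map matching the functions `u 0 ≤ ⋯ ≤ u m` over `x`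
with those over `H x t` and of slope `1 - t` elsewhere. -/
noncomputable def liftHomotopy (H : (α → ℝ) → ℝ → α → ℝ) (u : ℕ → (α → ℝ) → ℝ) (m : ℕ)
    (w : Option α → ℝ) (t : ℝ) : Option α → ℝ :=
  snoc (H (init w) t) (piecewiseLinear (fun j => u j (init w)) (fun j => u j (H (init w) t)) m
    (1 - t) (w none))

section liftHomotopy

variable {V : Set (α → ℝ)} {H : (α → ℝ) → ℝ → α → ℝ} {u : ℕ → (α → ℝ) → ℝ} {m : ℕ}
  {p : Option α → ℝ}

theorem HasConstantOrder.succ_eq_iff (h : HasConstantOrder lab u (m + 1))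
    (hmono : ∀ x, Monotone fun j => u j x) {x y : α → ℝ} (hxy : lab x = lab y) {j : ℕ}
    (hj : j < m) : u j x = u (j + 1) x ↔ u j y = u (j + 1) y := by
  have hlt (z : α → ℝ) : u j z = u (j + 1) z ↔ ¬ u j z < u (j + 1) z :=
    ⟨fun h => h.not_lt, (hmono z j.le_succ).eq_of_not_lt⟩
  rw [hlt, hlt, h.lt_iff hxy (by omega) (by omega)]

theorem continuousOn_liftHomotopy (hu : ∀ j, Continuous (u j))
    (hmono : ∀ x, Monotone fun j => u j x) (hord : HasConstantOrder lab u (m + 1))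
    (hp : ∀ j ≤ m, u j (init p) = p none) (h : S.IsConicContraction lab (init p) V H) :
    ContinuousOn (fun q : (Option α → ℝ) × ℝ => liftHomotopy H u m q.1 q.2)
      ((init ⁻¹' V) ×ˢ Icc 0 1) := by
  have hfst : Continuous fun q : (Option α → ℝ) × ℝ => init q.1 :=
    continuous_init.comp continuous_fst
  have hH : ContinuousOn (fun q : (Option α → ℝ) × ℝ => H (init q.1) q.2)
      ((init ⁻¹' V) ×ˢ Icc 0 1) :=
    h.continuousOn.comp (hfst.prodMk continuous_snd).continuousOn fun q hq => ⟨hq.1, hq.2⟩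
  rintro q ⟨hqV, hq⟩
  refine continuous_snoc.continuousAt.comp_continuousWithinAt ((hH q ⟨hqV, hq⟩).prodMk
    (continuousWithinAt_piecewiseLinear (u := fun j (q : (Option α → ℝ) × ℝ) => u j (init q.1))
      (v := fun j q => u j (H (init q.1) q.2)) (s := fun q => q.1 none)
      (fun j => ((hu j).comp hfst).continuousWithinAt)
      (fun j => (hu j).continuousAt.comp_continuousWithinAt (hH q ⟨hqV, hq⟩))
      (continuous_const.sub continuous_snd).continuousWithinAt
      ((continuous_apply none).comp continuous_fst).continuousWithinAt fun j hj hjq => ?_))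
  rcases hq.2.eq_or_lt with h1 | h1
  · simp only [h1, h.apply_one _ hqV, hp j hj.le, hp (j + 1) hj]
  · exact (hord.succ_eq_iff hmono (h.label_eq _ hqV _ ⟨hq.1, h1⟩) hj).2 hjq

theorem liftLabel_liftHomotopy (hmono : ∀ x, Monotone fun j => u j x)
    (hord : HasConstantOrder lab u (m + 1)) {w : Option α → ℝ} {t : ℝ}
    (hw : lab (H (init w) t) = lab (init w)) (ht : t < 1) :
    liftLabel lab u (m + 1) (liftHomotopy H u m w t) = liftLabel lab u (m + 1) w := by
  refine liftLabel_eq_iff.2 ⟨by rw [liftHomotopy, init_snoc]; exact hw, fun i => ?_⟩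
  have hE : StrictMono (piecewiseLinear (fun j => u j (init w)) (fun j => u j (H (init w) t)) m
      (1 - t)) :=
    strictMono_piecewiseLinear (hmono _) (hmono _)
      (fun j hj => (hord.succ_eq_iff hmono hw hj).1) (by linarith)
  have hknot := piecewiseLinear_knot (hmono (init w)) (v := fun j => u j (H (init w) t))
    (fun j hj => (hord.succ_eq_iff hmono hw hj).2) (1 - t) (Nat.lt_succ_iff.1 i.2)
  simp only [liftHomotopy, liftLabel, snoc_none, init_snoc, ← hknot, sign_apply, sub_pos, sub_neg,
    hE.lt_iff_lt]

theorem IsConicContraction.lift [Finite α] (hdef : ∀ j, S.DefFun (u j))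
    (hu : ∀ j, Continuous (u j)) (hmono : ∀ x, Monotone fun j => u j x)
    (hord : HasConstantOrder lab u (m + 1)) (hp : ∀ j ≤ m, u j (init p) = p none)
    (h : S.IsConicContraction lab (init p) V H) :
    S.IsConicContraction (liftLabel lab u (m + 1)) p (init ⁻¹' V) (liftHomotopy H u m) where
  continuousOn := continuousOn_liftHomotopy hu hmono hord hp h
  apply_base t ht := by
    have hknot := piecewiseLinear_knot (v := fun j => u j (init p)) (hmono (init p))
      (fun _ _ => id) (1 - t) m.zero_le
    rw [hp 0 m.zero_le] at hknot
    rw [liftHomotopy, h.apply_base t ht, hknot, snoc_init]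
  apply_zero w hw := by
    rw [liftHomotopy, h.apply_zero _ hw, sub_zero, piecewiseLinear_self (hmono _), snoc_init]
  apply_one w hw := by
    have hsum : ∑ j ∈ Finset.range m, clampRatio (u j (init w)) (u (j + 1) (init w)) (w none) *
        (u (j + 1) (init p) - u j (init p)) = 0 := Finset.sum_eq_zero fun j hj => by
      have hj := Finset.mem_range.1 hj
      rw [hp j hj.le, hp (j + 1) hj, sub_self, mul_zero]
    rw [liftHomotopy, h.apply_one _ hw, piecewiseLinear, hsum, hp 0 m.zero_le, sub_self]
    simp only [zero_mul, add_zero, snoc_init]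
  label_eq w hw t ht := liftLabel_liftHomotopy hmono hord (h.label_eq _ hw t ht) ht.2
  defFun w hw i := .snoc_apply (fun j => h.defFun _ hw j) (.piecewiseLinear (fun j => .const _)
    (fun j => (hdef j).comp (h.defFun _ hw)) (.sub (.const _) (.coord _)) (.const _)) i

end liftHomotopy

theorem exists_knots (hdef : ∀ i, S.DefFun (g i)) (hg : ∀ i, Continuous (g i))
    (hmono : ∀ x, Monotone fun i => g i x) (hord : HasConstantOrder lab g n) (x : α → ℝ) (s : ℝ) :
    ∃ (u : ℕ → (α → ℝ) → ℝ) (m : ℕ), (∀ j, S.DefFun (u j)) ∧ (∀ j, Continuous (u j)) ∧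
      (∀ y, Monotone fun j => u j y) ∧ HasConstantOrder lab u (m + 1) ∧
      (∀ j ≤ m, u j x = s) ∧ ∀ i < n, g i x = s → ∃ j ≤ m, u j = g i := by
  classical
  by_cases hs : ∃ i, i < n ∧ g i x = s
  · obtain ⟨b, hb, hbmax⟩ : ∃ b, (b < n ∧ g b x = s) ∧ ∀ i < n, g i x = s → i ≤ b := by
      obtain ⟨i, hi⟩ := hs
      exact ⟨_, Nat.findGreatest_spec (P := fun i => i < n ∧ g i x = s) hi.1.le hi,
        fun i hi hix => Nat.le_findGreatest hi.le ⟨hi, hix⟩⟩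
    let a := Nat.find hs
    have hab : a ≤ b := Nat.find_min' hs hb
    refine ⟨fun j => g (a + j), b - a, fun j => hdef _, fun j => hg _,
      fun y i j hij => hmono y (by omega), fun y z hyz i hi j hj => ?_, fun j hj => ?_,
      fun i hi hix => ?_⟩
    · have := hb.1
      exact hord y z hyz _ (by omega) _ (by omega)
    · refine le_antisymm ?_ ?_
      · exact (hmono x (by omega : a + j ≤ b)).trans_eq hb.2
      · exact (Nat.find_spec hs).2.symm.trans_le (hmono x (by omega : a ≤ a + j))
    · have hai : a ≤ i := Nat.find_min' hs ⟨hi, hix⟩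
      have hib := hbmax i hi hix
      exact ⟨i - a, by omega, congrArg g (Nat.add_sub_cancel' hai)⟩
  · exact ⟨fun _ _ => s, 0, fun _ => .const s, fun _ => continuous_const, fun _ => monotone_const,
      fun _ _ _ _ _ _ _ h => h, fun _ _ => rfl, fun i hi hix => absurd ⟨i, hi, hix⟩ hs⟩

theorem exists_isConicContraction_liftLabel [Finite α] (hdef : ∀ i, S.DefFun (g i))
    (hg : ∀ i, Continuous (g i)) (hmono : ∀ x, Monotone fun i => g i x)
    (hord : HasConstantOrder lab g n) {p : Option α → ℝ} {V : Set (α → ℝ)} (hV : V ∈ 𝓝 (init p))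
    {H : (α → ℝ) → ℝ → α → ℝ} (h : S.IsConicContraction lab (init p) V H) :
    ∃ V' ∈ 𝓝 p, ∃ H', S.IsConicContraction (liftLabel lab g n) p V' H' := by
  obtain ⟨u, m, hudef, hu, humono, huord, hup, hknot⟩ :=
    exists_knots hdef hg hmono hord (init p) (p none)
  have hU : ∀ᶠ w in 𝓝 p, ∀ i : Fin n, g i (init p) ≠ p none →
      SignType.sign (w none - g i (init w)) = SignType.sign (p none - g i (init p)) := by
    refine eventually_all.2 fun i => eventually_imp_distrib_left.2 fun hi => ?_
    have hcont : Continuous fun w : Option α → ℝ => w none - g i (init w) :=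
      (continuous_apply none).sub ((hg i).comp continuous_init)
    have hsign : ContinuousAt (fun w => SignType.sign (w none - g i (init w))) p :=
      ContinuousAt.comp (f := fun w : Option α → ℝ => w none - g i (init w))
        (continuousAt_sign_of_ne_zero (sub_ne_zero.2 hi.symm)) hcont.continuousAt
    exact hsign.eventually_mem ((isOpen_discrete {_}).mem_nhds rfl)
  have hlift := h.lift hudef hu humono huord hup
  obtain ⟨V', hV', hH⟩ := hlift.exists_of_label_eq_imp (lab' := liftLabel lab g n)
    (continuous_init.continuousAt.preimage_mem_nhds hV) hU fun w hw w' hw' hww' => by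
      obtain ⟨hl, hs⟩ := liftLabel_eq_iff.1 hww'
      refine liftLabel_eq_iff.2 ⟨hl, fun i => ?_⟩
      by_cases hi : g i (init p) = p none
      · obtain ⟨j, hj, hji⟩ := hknot i i.2 hi
        simpa only [liftLabel, hji] using hs ⟨j, Nat.lt_succ_iff.2 hj⟩
      · exact (hw i hi).trans (hw' i hi).symm
  exact ⟨V', hV', _, hH⟩

theorem IsStratification.liftLabel [Finite α] (h : S.IsStratification lab)
    (hdef : ∀ i, S.DefFun (g i)) (hg : ∀ i, Continuous (g i))
    (hmono : ∀ x, Monotone fun i => g i x) (hord : HasConstantOrder lab g n) :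
    S.IsStratification (liftLabel lab g n) where
  defSet_fiber := defSet_liftLabel_fiber h.defSet_fiber hdef
  fiberConnectedAt τ p := fiberConnectedAt_liftLabel hg hord (h.fiberConnectedAt τ.1 (init p))
  exists_contraction p := by
    obtain ⟨V, hV, H, hH⟩ := h.exists_contraction (init p)
    exact exists_isConicContraction_liftLabel hdef hg hmono hord hV hH

end Stratification

/-! ### Existence of stratifications -/

section ExistsStratification

open Bornology

variable {ι : Type*} {κ : Type} {lab : (α → ℝ) → ι}

/-- Each set `A k` is a union of strata of some stratification with finitely many strata. -/
def IsStratifiable (S : OMinimalRealExpansion) (A : κ → Set (α → ℝ)) : Prop :=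
  ∃ (ι : Type) (_ : Finite ι) (lab : (α → ℝ) → ι), S.IsStratification lab ∧
    ∀ k x y, lab x = lab y → x ∈ A k → y ∈ A k

/-- Every finite family of bounded definable subsets of `ℝ^α` is stratifiable. This is the
induction hypothesis in the proof that it holds for all finite `α`. -/
def HasStratifications (S : OMinimalRealExpansion) (α : Type) : Prop :=
  ∀ {κ : Type} [Finite κ] {A : κ → Set (α → ℝ)}, (∀ k, S.DefSet (A k)) →
    (∀ k, IsBounded (A k)) → S.IsStratifiable A

theorem IsStratifiable.comap [Finite α] [Finite β] {e : (β → ℝ) ≃ₜ (α → ℝ)}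
    (he : ∀ i, S.DefFun fun w => e w i) (he' : ∀ j, S.DefFun fun w => e.symm w j)
    {A : κ → Set (β → ℝ)} (h : S.IsStratifiable fun k => e.symm ⁻¹' A k) : S.IsStratifiable A := by
  obtain ⟨ι, hι, lab, hlab, hA⟩ := h
  exact ⟨ι, hι, lab ∘ e, hlab.comap he he', fun k x y hxy => by
    simpa using hA k (e x) (e y) hxy⟩

theorem subset_of_isPreconnected_of_disjoint_frontier {X : Type*} [TopologicalSpace X]
    {A C : Set X} (hC : IsPreconnected C) (hCA : Disjoint C (frontier A)) (h : (C ∩ A).Nonempty) :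
    C ⊆ A := by
  have hcover : C ⊆ interior A ∪ (closure A)ᶜ := fun z hz => by
    by_contra hzA
    simp only [mem_union, mem_compl_iff, not_or, not_not] at hzA
    exact hCA.notMem_of_mem_left hz ⟨hzA.2, hzA.1⟩
  obtain ⟨x, hxC, hxA⟩ := h
  refine (hC.subset_left_of_subset_union isOpen_interior isClosed_closure.isOpen_compl
    (disjoint_compl_right.mono_left (interior_subset.trans subset_closure)) hcover
    ⟨x, hxC, ?_⟩).trans interior_subset
  exact (hcover hxC).resolve_right fun hx => hx (subset_closure hxA)

-- Two limits `L₁ < L₂` of `ξ` at `p` would put the whole segment between them into `F`, by the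
-- intermediate value theorem on the connected pieces of the stratum near `p`.
theorem subsingleton_fiber_closure_graph {l : ι} {p : α → ℝ} (hl : FiberConnectedAt lab l p)
    {F : Set (Option α → ℝ)} (hF : IsClosed F) (hfin : (fiber F p).Finite) {ξ : (α → ℝ) → ℝ}
    (hξ : ContinuousOn ξ (lab ⁻¹' {l})) (hξF : ∀ x, lab x = l → snoc x (ξ x) ∈ F) :
    (fiber (closure ((fun x => snoc x (ξ x)) '' (lab ⁻¹' {l}))) p).Subsingleton := by
  set Γ := (fun x => snoc x (ξ x)) '' (lab ⁻¹' {l})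
  have hexists {L : ℝ} (hL : L ∈ fiber (closure Γ) p) {V : Set (α → ℝ)} (hV : V ∈ 𝓝 p) {T : Set ℝ}
      (hT : T ∈ 𝓝 L) : ∃ x ∈ V, lab x = l ∧ ξ x ∈ T := by
    have hnhds : init ⁻¹' V ∩ {w | w none ∈ T} ∈ 𝓝 (snoc p L) :=
      inter_mem (continuous_init.continuousAt.preimage_mem_nhds (by rwa [init_snoc]))
        ((continuous_apply none).continuousAt.preimage_mem_nhds (by rwa [snoc_none]))
    obtain ⟨_, ⟨hxV, hxT⟩, x, hx, rfl⟩ := mem_closure_iff_nhds.1 hL _ hnhds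
    exact ⟨x, by simpa using hxV, hx, by simpa using hxT⟩
  have hle {L₁ L₂ : ℝ} (h₁ : L₁ ∈ fiber (closure Γ) p) (h₂ : L₂ ∈ fiber (closure Γ) p) :
      L₂ ≤ L₁ := by
    by_contra! hlt
    refine (Ioo_infinite hlt) (hfin.subset fun c hc => ?_)
    have hclosed : IsClosed {x : α → ℝ | snoc x c ∈ F} :=
      hF.preimage (continuous_snoc.comp (.prodMk continuous_id continuous_const))
    refine hclosed.closure_subset (mem_closure_iff_nhds.2 fun U hU => ?_)
    obtain ⟨V, hV, C, hC, hVC, hCU⟩ := hl U hU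
    obtain ⟨x₁, hx₁V, hx₁, hξ₁⟩ := hexists h₁ hV (Iio_mem_nhds hc.1)
    obtain ⟨x₂, hx₂V, hx₂, hξ₂⟩ := hexists h₂ hV (Ioi_mem_nhds hc.2)
    obtain ⟨x, hx, hxc⟩ := hC.intermediate_value (hVC ⟨hx₁V, hx₁⟩) (hVC ⟨hx₂V, hx₂⟩)
      (hξ.mono fun y hy => (hCU hy).1) ⟨hξ₁.le, hξ₂.le⟩
    exact ⟨x, (hCU hx).2, by simpa only [hxc, mem_ofPred_eq] using hξF x (hCU hx).1⟩
  exact fun L₁ h₁ L₂ h₂ => le_antisymm (hle h₂ h₁) (hle h₁ h₂)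

theorem HasStratifications.exists_continuous_cover [Finite α] (hα : S.HasStratifications α)
    {F : Set (Option α → ℝ)} (hFdef : S.DefSet F) (hF : IsCompact F)
    (hfin : ∀ x, (fiber F x).Finite) :
    ∃ (J : Type) (_ : Finite J) (f : J → (α → ℝ) → ℝ), (∀ j, S.DefFun (f j)) ∧
      (∀ j, Continuous (f j)) ∧ (∀ j, HasCompactSupport (f j)) ∧
      ∀ w ∈ F, ∃ j, f j (init w) = w none := by
  cases nonempty_fintype α
  obtain ⟨M, hM⟩ := exists_ncard_fiber_le hFdef hfin
  let ξ (i : Fin M) (x : α → ℝ) : ℝ := nthLargest (fiber F x) i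
  have hξ (i : Fin M) : S.DefFun (ξ i) := DefFun.nthLargest_fiber hFdef i
  choose K hK X hXdef hXcover hXcont using fun i => exists_finite_cover_continuousOn (hξ i)
  let D (q : Σ i, K i) : Set (α → ℝ) := {x | snoc x (ξ q.1 x) ∈ F ∧ x ∈ X q.1 q.2}
  have hDdef (q) : S.DefSet (D q) :=
    DefPred.and (.mem hFdef fun j => .snoc_apply .coord (hξ q.1) j) (hXdef q.1 q.2)
  have hDbdd (q) : IsBounded (D q) := (hF.image continuous_init).isBounded.subset
    fun x hx => ⟨_, hx.1, init_snoc ..⟩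
  obtain ⟨ι, hι, lab, hlab, hD⟩ := hα hDdef hDbdd
  let Γ (q : Fin M × ι) : Set (Option α → ℝ) :=
    {w | w ∈ F ∧ lab (init w) = q.2 ∧ ξ q.1 (init w) = w none}
  have hΓdef (q) : S.DefSet (Γ q) := DefPred.and hFdef
    (.and (DefPred.reindex (hlab.defSet_fiber q.2) some)
      (.eq ((hξ q.1).comp fun _ => .coord _) (.coord _)))
  have hΓ (q) : closure (Γ q) ⊆ F := closure_minimal (fun w hw => hw.1) hF.isClosed
  have hΓsub (q : Fin M × ι) (x) : (fiber (closure (Γ q)) x).Subsingleton := by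
    rcases (Γ q).eq_empty_or_nonempty with hempty | ⟨w, hwF, hwl, hwξ⟩
    · simp only [hempty, closure_empty, fiber, mem_empty_iff_false]
      exact subsingleton_empty
    obtain ⟨k, hk⟩ := hXcover q.1 (init w)
    have hstratum (y) (hy : lab y = q.2) : y ∈ D ⟨q.1, k⟩ :=
      hD ⟨q.1, k⟩ _ y (hwl.trans hy.symm) ⟨by rwa [hwξ, snoc_init], hk⟩
    refine (subsingleton_fiber_closure_graph (hlab.fiberConnectedAt q.2 x) hF.isClosed (hfin x)
      ((hXcont q.1 k).mono fun y hy => (hstratum y hy).2) fun y hy => (hstratum y hy).1).anti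
        fun t ht => closure_mono ?_ ht
    exact fun v hv => ⟨init v, hv.2.1, by simp only [hv.2.2, snoc_init]⟩
  choose f hfdef hfcont hfsupp hf using fun q => exists_continuous_extension_of_isCompact_graph
    (defSet_closure (hΓdef q)) (hF.of_isClosed_subset isClosed_closure (hΓ q)) (hΓsub q)
  refine ⟨Fin M × ι, inferInstance, f, hfdef, hfcont, hfsupp, fun w hw => ?_⟩
  obtain ⟨i, hi, hiw⟩ := exists_nthLargest_eq (hfin (init w)) (apply_none_mem_fiber_init.2 hw)
  exact ⟨(⟨i, hi.trans_le (hM _)⟩, lab (init w)), hf _ w (subset_closure ⟨hw, rfl, hiw⟩)⟩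

section Label

variable {g : ℕ → (α → ℝ) → ℝ} {n : ℕ} {A : Set (Option α → ℝ)} {w w' : Option α → ℝ}

theorem liftLabel_snoc_eq_iff {t : ℝ} :
    liftLabel lab g n (snoc (init w) t) = liftLabel lab g n w ↔
      ∀ i : Fin n, SignType.sign (t - g i (init w)) = SignType.sign (w none - g i (init w)) := by
  simp only [liftLabel, Prod.mk.injEq, funext_iff, init_snoc, snoc_none, true_and]

theorem ordConnected_liftLabel_fiber (x : α → ℝ) (τ : ι × (Fin n → SignType)) :
    {t | liftLabel lab g n (snoc x t) = τ}.OrdConnected := by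
  refine ordConnected_def.2 fun r hr t ht s hs => ?_
  rw [mem_ofPred_eq, liftLabel_eq_iff] at hr ht ⊢
  simp only [init_snoc, snoc_none] at hr ht ⊢
  refine ⟨hr.1, fun i => ?_⟩
  have hsign : Monotone fun t => SignType.sign (t - g i x) := fun _ _ h =>
    SignType.sign.monotone (sub_le_sub_right h _)
  exact le_antisymm ((hsign hs.2).trans_eq (ht.2 i)) ((hr.2 i).symm.trans_le (hsign hs.1))

theorem mem_of_liftLabel_eq_of_init_eq
    (hA : ∀ v ∈ frontier A, ∃ i < n, g i (init v) = v none) (hinit : init w = init w')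
    (hlab : liftLabel lab g n w = liftLabel lab g n w') (hw : w ∈ A) : w' ∈ A := by
  by_cases hzero : ∃ i : Fin n, w none = g i (init w)
  · obtain ⟨i, hi⟩ := hzero
    have hi' : w' none = g i (init w') := by
      have hs := (liftLabel_eq_iff.1 hlab).2 i
      rw [hi, sub_self, sign_zero] at hs
      exact sub_eq_zero.1 (sign_eq_zero_iff.1 hs.symm)
    rwa [← snoc_init w', hi', ← hinit, ← hi, snoc_init]
  let T : Set ℝ := {t | liftLabel lab g n (snoc (init w) t) = liftLabel lab g n w}
  have hT : IsPreconnected ((fun t => snoc (init w) t) '' T) :=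
    (ordConnected_liftLabel_fiber _ _).isPreconnected.image _
      (continuous_snoc.comp (.prodMk continuous_const continuous_id)).continuousOn
  refine subset_of_isPreconnected_of_disjoint_frontier hT ?_ ⟨w, ⟨w none, ?_, snoc_init w⟩, hw⟩
    ⟨w' none, ?_, by simp only [hinit, snoc_init]⟩
  · rw [disjoint_left]
    rintro _ ⟨t, ht, rfl⟩ hfrontier
    obtain ⟨i, hi, hit⟩ := hA _ hfrontier
    have hs := (liftLabel_eq_iff.1 ht).2 ⟨i, hi⟩
    rw [hit, sub_self, sign_zero] at hs
    exact hzero ⟨⟨i, hi⟩, sub_eq_zero.1 (sign_eq_zero_iff.1 hs.symm)⟩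
  · simp only [T, mem_ofPred_eq, snoc_init]
  · simp only [T, mem_ofPred_eq, hinit, snoc_init, hlab]

theorem isBounded_liftLabel_fiber (hA : ∀ v ∈ frontier A, ∃ i < n, g i (init v) = v none)
    (hbdd : IsBounded A) (hw : w ∈ A) :
    IsBounded {t | liftLabel lab g n (snoc (init w) t) = liftLabel lab g n w} :=
  (hbdd.image_eval none).subset fun _ ht =>
    ⟨_, mem_of_liftLabel_eq_of_init_eq hA (init_snoc ..).symm (Eq.symm ht) hw, snoc_none ..⟩

theorem exists_apply_none_le_of_mem (hA : ∀ v ∈ frontier A, ∃ i < n, g i (init v) = v none)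
    (hbdd : IsBounded A) (hw : w ∈ A) : ∃ i < n, w none ≤ g i (init w) := by
  by_contra! h
  refine not_bddAbove_Ici (w none) ((isBounded_liftLabel_fiber (lab := id) hA hbdd hw).bddAbove.mono
    fun t ht => liftLabel_snoc_eq_iff.2 fun i => ?_)
  rw [sign_pos (sub_pos.2 (h i i.2)), sign_pos (sub_pos.2 ((h i i.2).trans_le ht))]

theorem exists_le_apply_none_of_mem (hA : ∀ v ∈ frontier A, ∃ i < n, g i (init v) = v none)
    (hbdd : IsBounded A) (hw : w ∈ A) : ∃ i < n, g i (init w) ≤ w none := by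
  by_contra! h
  refine not_bddBelow_Iic (w none) ((isBounded_liftLabel_fiber (lab := id) hA hbdd hw).bddBelow.mono
    fun t ht => liftLabel_snoc_eq_iff.2 fun i => ?_)
  rw [sign_neg (sub_neg.2 (h i i.2)), sign_neg (sub_neg.2 ((mem_Iic.1 ht).trans_lt (h i i.2)))]

theorem liftLabel_snoc_midpoint_eq (hmono : Monotone fun i => g i (init w)) {i : ℕ}
    (hlo : g i (init w) < w none) (hup : w none < g (i + 1) (init w)) :
    liftLabel lab g n (snoc (init w) ((g i (init w) + g (i + 1) (init w)) / 2)) =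
      liftLabel lab g n w := by
  refine liftLabel_snoc_eq_iff.2 fun k => ?_
  rcases le_or_gt (k : ℕ) i with hk | hk
  · have hle : g k (init w) ≤ g i (init w) := hmono hk
    rw [sign_pos (by linarith), sign_pos (by linarith)]
  · have hle : g (i + 1) (init w) ≤ g k (init w) := hmono hk
    rw [sign_neg (by linarith), sign_neg (by linarith)]

theorem exists_liftLabel_snoc_midpoint_eq (hmono : ∀ x, Monotone fun i => g i x)
    (hup : ∃ i < n, w none ≤ g i (init w)) (hlo : ∃ i < n, g i (init w) ≤ w none) :
    ∃ i < n, ∃ j < n, ∀ v : Option α → ℝ, liftLabel lab g n v = liftLabel lab g n w →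
      liftLabel lab g n (snoc (init v) ((g i (init v) + g j (init v)) / 2)) =
        liftLabel lab g n v := by
  classical
  obtain ⟨hb, hwb⟩ := Nat.find_spec hup
  have hmin (i) (hi : i < Nat.find hup) : g i (init w) < w none :=
    not_le.1 fun hle => Nat.find_min hup hi ⟨hi.trans hb, hle⟩
  generalize Nat.find hup = b at hb hwb hmin
  have hsign (v) (hv : liftLabel lab g n v = liftLabel lab g n w) (i : ℕ) (hi : i < n) :
      SignType.sign (v none - g i (init v)) = SignType.sign (w none - g i (init w)) :=
    (liftLabel_eq_iff.1 hv).2 ⟨i, hi⟩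
  rcases hwb.eq_or_lt with heq | hlt
  · refine ⟨b, hb, b, hb, fun v hv => ?_⟩
    have hs := hsign v hv b hb
    rw [heq, sub_self, sign_zero] at hs
    rw [add_self_div_two, ← sub_eq_zero.1 (sign_eq_zero_iff.1 hs), snoc_init]
  · cases b with
    | zero =>
      obtain ⟨i, -, hi⟩ := hlo
      exact absurd (hmono _ i.zero_le) (hi.trans_lt hlt).not_ge
    | succ a =>
      refine ⟨a, by omega, a + 1, hb, fun v hv => liftLabel_snoc_midpoint_eq (hmono _) ?_ ?_⟩
      · have hs := hsign v hv a (by omega)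
        rw [sign_pos (sub_pos.2 (hmin a a.lt_succ_self))] at hs
        exact sub_pos.1 (sign_eq_one_iff.1 hs)
      · have hs := hsign v hv (a + 1) hb
        rw [sign_neg (sub_neg.2 hlt)] at hs
        exact sub_neg.1 (sign_eq_neg_one_iff.1 hs)

theorem mem_of_liftLabel_eq (hmono : ∀ x, Monotone fun i => g i x)
    (hA : ∀ v ∈ frontier A, ∃ i < n, g i (init v) = v none) (hbdd : IsBounded A)
    (hlab : ∀ i < n, ∀ j < n, ∀ x y, lab x = lab y → snoc x ((g i x + g j x) / 2) ∈ A →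
      snoc y ((g i y + g j y) / 2) ∈ A)
    (hww' : liftLabel lab g n w = liftLabel lab g n w') (hw : w ∈ A) : w' ∈ A := by
  obtain ⟨i, hi, j, hj, hmid⟩ := exists_liftLabel_snoc_midpoint_eq (lab := lab) hmono
    (exists_apply_none_le_of_mem hA hbdd hw) (exists_le_apply_none_of_mem hA hbdd hw)
  refine mem_of_liftLabel_eq_of_init_eq hA (init_snoc ..) (hmid w' hww'.symm) ?_
  refine hlab i hi j hj _ _ (congrArg Prod.fst hww') ?_
  exact mem_of_liftLabel_eq_of_init_eq hA (init_snoc ..).symm (hmid w rfl).symm hw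

end Label

theorem defSet_iUnion_frontier [Finite α] [Finite κ] {A : κ → Set (α → ℝ)}
    (hA : ∀ k, S.DefSet (A k)) : S.DefSet (⋃ k, frontier (A k)) :=
  (DefPred.exists_finite fun k => defSet_frontier (hA k)).congr fun _ => mem_iUnion.symm

theorem isCompact_iUnion_frontier [Finite α] [Finite κ] {A : κ → Set (α → ℝ)}
    (hbdd : ∀ k, IsBounded (A k)) : IsCompact (⋃ k, frontier (A k)) := by
  cases nonempty_fintype α
  exact isCompact_iUnion fun k => (hbdd k).isCompact_closure.of_isClosed_subset isClosed_frontier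
    frontier_subset_closure

theorem HasStratifications.isStratifiable_of_finite_fiber [Finite α] [Finite κ]
    (hα : S.HasStratifications α) {A : κ → Set (Option α → ℝ)} (hA : ∀ k, S.DefSet (A k))
    (hbdd : ∀ k, IsBounded (A k)) (hfin : ∀ x, (fiber (⋃ k, frontier (A k)) x).Finite) :
    S.IsStratifiable A := by
  cases nonempty_fintype α
  obtain ⟨J, _, f, hfdef, hfcont, hfsupp, hf⟩ := hα.exists_continuous_cover
    (defSet_iUnion_frontier hA) (isCompact_iUnion_frontier hbdd) hfin
  obtain ⟨g, hgdef, hgcont, hgsupp, hgmono, n, hg⟩ :=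
    exists_monotone_rearrangement hfdef hfcont hfsupp
  have hfrontier (k) : ∀ v ∈ frontier (A k), ∃ i < n, g i (init v) = v none := fun v hv => by
    obtain ⟨j, hj⟩ := hf v (mem_iUnion.2 ⟨k, hv⟩)
    obtain ⟨i, hi, hij⟩ := hg j (init v)
    exact ⟨i, hi, hij.trans hj⟩
  let B (q : Fin n × Fin n) : Set (α → ℝ) := {x | g q.1 x < g q.2 x}
  let M (q : Fin n × Fin n × κ) : Set (α → ℝ) :=
    {x | snoc x ((g q.1 x + g q.2.1 x) / 2) ∈ A q.2.2}
  have hBbdd (q) : IsBounded (B q) :=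
    ((hgsupp q.1).isBounded.union (hgsupp q.2).isBounded).subset fun x hx => by
      by_contra! hx'
      rw [mem_union, not_or] at hx'
      exact hx.ne ((image_eq_zero_of_notMem_tsupport hx'.1).trans
        (image_eq_zero_of_notMem_tsupport hx'.2).symm)
  have hMbdd (q) : IsBounded (M q) :=
    ((hbdd q.2.2).isCompact_closure.image continuous_init).isBounded.subset
      fun x hx => ⟨_, subset_closure hx, init_snoc ..⟩
  have hMdef (q) : S.DefSet (M q) := DefPred.mem (hA q.2.2) fun j =>
    .snoc_apply .coord (.div (.add (hgdef q.1) (hgdef q.2.1)) (.const 2)) j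
  obtain ⟨ι, _, lab, hlab, hBM⟩ := hα (A := Sum.elim B M)
    (Sum.forall.2 ⟨fun q => DefPred.lt (hgdef q.1) (hgdef q.2), hMdef⟩)
    (Sum.forall.2 ⟨hBbdd, hMbdd⟩)
  have hord : HasConstantOrder lab g n := fun x y hxy i hi j hj =>
    hBM (Sum.inl (⟨i, hi⟩, ⟨j, hj⟩)) x y hxy
  refine ⟨_, inferInstance, _, hlab.liftLabel hgdef hgcont hgmono hord, fun k _ _ =>
    mem_of_liftLabel_eq hgmono (hfrontier k) (hbdd k) fun i hi j hj x y hxy =>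
      hBM (Sum.inr (⟨i, hi⟩, ⟨j, hj⟩, k)) x y hxy⟩

theorem HasStratifications.isStratifiable_option [Finite α] [Finite κ] (hα : S.HasStratifications α)
    {A : κ → Set (Option α → ℝ)} (hA : ∀ k, S.DefSet (A k)) (hbdd : ∀ k, IsBounded (A k)) :
    S.IsStratifiable A := by
  cases nonempty_fintype α
  have hinterior : ¬ (interior (⋃ k, frontier (A k))).Nonempty := fun h =>
    (exists_nonempty_interior_of_iUnion (fun k => defSet_frontier (hA k)) h).elim
      fun k => not_nonempty_interior_frontier (hA k)
  obtain ⟨P, hP, hPdef, hfin⟩ :=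
    exists_translate_finite_fiber (defSet_iUnion_frontier hA) hinterior
  refine IsStratifiable.comap (e := (shear P hP).symm)
    (DefFun.shear_symm_apply hP hPdef .coord) (DefFun.shear_apply hP hPdef .coord)
    (hα.isStratifiable_of_finite_fiber (fun k => ?_) (fun k => ?_) fun x => ?_)
  · exact DefPred.mem (hA k) (DefFun.shear_apply hP hPdef .coord)
  · refine ((hbdd k).isCompact_closure.image (shear P hP).symm.continuous).isBounded.subset
      fun w hw => ⟨_, subset_closure hw, (shear P hP).symm_apply_apply w⟩
  · simp only [Homeomorph.symm_symm, ← Homeomorph.preimage_frontier, ← preimage_iUnion]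
    convert hfin x using 1
    ext t
    simp [fiber, shear]

theorem defFun_piCongrLeft (e : α ≃ β) (j : β) :
    S.DefFun fun x => Homeomorph.piCongrLeft (Y := fun _ => ℝ) e x j := by
  obtain ⟨i, rfl⟩ := e.surjective j
  simpa only [Homeomorph.piCongrLeft_apply_apply] using DefFun.coord i

theorem hasStratifications [Finite α] : S.HasStratifications α := by
  cases nonempty_fintype α
  refine Fintype.induction_empty_option (P := fun α _ => S.HasStratifications α)
    (fun α β _ e ih κ _ A hA hbdd => ?_) (fun {κ} _ A _ _ => ?_)
    (fun α _ ih κ _ A hA hbdd => ih.isStratifiable_option hA hbdd) α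
  · have := Fintype.ofEquiv β e.symm
    let E := (Homeomorph.piCongrLeft (Y := fun _ => ℝ) e).symm
    refine IsStratifiable.comap (e := E) (fun _ => .coord _) (defFun_piCongrLeft e)
      (ih (fun k => DefPred.mem (hA k) (defFun_piCongrLeft e)) fun k => ?_)
    exact ((hbdd k).isCompact_closure.image E.continuous).isBounded.subset
      fun x hx => ⟨_, subset_closure hx, E.apply_symm_apply x⟩
  · refine ⟨Unit, inferInstance, fun _ => (), ⟨fun _ => DefPred.const _, fun _ p U hU => ?_,
      fun p => ?_⟩, fun k x y _ hx => Subsingleton.elim x y ▸ hx⟩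
    · exact ⟨U, hU, U, subsingleton_of_subsingleton.isPreconnected, inter_subset_left,
        fun x hx => ⟨rfl, hx⟩⟩
    · exact ⟨univ, univ_mem, fun _ _ => p, continuousOn_const, fun _ _ => rfl,
        fun _ _ => Subsingleton.elim .., fun _ _ => rfl, fun _ _ _ _ => rfl, fun _ _ _ => .const _⟩

end ExistsStratification

/-! ### Definable paths -/

section Paths

open unitInterval

variable {c : Set (α → ℝ)} {x y z : c}

theorem exists_isConicContraction_of_defSet [Finite α] (hc : S.DefSet c) (p : α → ℝ) :
    ∃ V ∈ 𝓝 p, ∃ H, S.IsConicContraction (· ∈ c) p V H := by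
  cases nonempty_fintype α
  let B : Set (α → ℝ) := Icc (p - 1) (p + 1)
  have hB : S.DefSet B := (DefPred.and
    (.forall_finite fun i => .le (.const ((p - 1) i)) (.coord i))
    (.forall_finite fun i => .le (.coord i) (.const ((p + 1) i)))).congr fun _ => Iff.rfl
  obtain ⟨ι, -, lab, hlab, hcB⟩ := hasStratifications (A := fun _ : Unit => c ∩ B)
    (fun _ => DefPred.and hc hB) fun _ => (Metric.isBounded_Icc _ _).subset inter_subset_right
  obtain ⟨V, hV, H, hH⟩ := hlab.exists_contraction p
  have hBp : B ∈ 𝓝 p := pi_Icc_mem_nhds (fun i => sub_one_lt (p i)) fun i => lt_add_one (p i)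
  obtain ⟨V', hV', hH'⟩ := hH.exists_of_label_eq_imp (lab' := (· ∈ c)) hV hBp
    fun x hx y hy hxy => propext ⟨fun hxc => (hcB () x y hxy ⟨hxc, hx⟩).1,
      fun hyc => (hcB () y x hxy.symm ⟨hyc, hy⟩).1⟩
  exact ⟨V', hV', H, hH'⟩

theorem IsConicContraction.apply_mem {p x : α → ℝ} {V : Set (α → ℝ)} {H : (α → ℝ) → ℝ → α → ℝ}
    (h : S.IsConicContraction (· ∈ c) p V H) (hp : p ∈ c) (hxV : x ∈ V) (hx : x ∈ c) {t : ℝ}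
    (ht : t ∈ Icc 0 1) : H x t ∈ c := by
  rcases ht.2.lt_or_eq with hlt | rfl
  · exact (h.label_eq x hxV t ⟨ht.1, hlt⟩).mpr hx
  · rwa [h.apply_one x hxV]

/-- A path in a subset of `ℝ^α` is definable if it is the restriction to `[0, 1]` of a map
`ℝ → ℝ^α` with definable coordinates. -/
def IsDefinablePath (S : OMinimalRealExpansion) (γ : Path x y) : Prop :=
  ∃ h : ℝ → α → ℝ, (∀ j, S.DefFun fun w : Unit → ℝ => h (w ()) j) ∧ ∀ t, (γ t : α → ℝ) = h t

namespace IsDefinablePath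

theorem refl (x : c) : S.IsDefinablePath (Path.refl x) :=
  ⟨fun _ => x, fun _ => .const _, fun _ => rfl⟩

theorem symm {γ : Path x y} (hγ : S.IsDefinablePath γ) : S.IsDefinablePath γ.symm := by
  obtain ⟨h, hdef, hγh⟩ := hγ
  exact ⟨fun t => h (1 - t), fun j => (hdef j).comp (e := fun w _ => 1 - w ())
    fun _ => .sub (.const 1) (.coord ()), fun t => hγh _⟩

theorem trans {γ : Path x y} {δ : Path y z} (hγ : S.IsDefinablePath γ)
    (hδ : S.IsDefinablePath δ) : S.IsDefinablePath (γ.trans δ) := by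
  obtain ⟨h, hdef, hγh⟩ := hγ
  obtain ⟨k, kdef, hδk⟩ := hδ
  refine ⟨fun t j => if t ≤ 1 / 2 then h (2 * t) j else k (2 * t - 1) j, fun j => ?_, fun t => ?_⟩
  · have htwo : S.DefFun fun w : Unit → ℝ => 2 * w () := .mul (.const 2) (.coord ())
    exact .ite (.le (.coord ()) (.const _)) ((hdef j).comp (e := fun w _ => 2 * w ()) fun _ => htwo)
      ((kdef j).comp (e := fun w _ => 2 * w () - 1) fun _ => htwo.sub (.const 1))
  · rw [Path.trans_apply]
    split_ifs with ht
    · simp only [ht, if_true]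
      exact hγh _
    · simp only [ht, if_false]
      exact hδk _

theorem defSet_graph [Finite α] {γ : Path x y} (hγ : S.IsDefinablePath γ) :
    S.DefSet {v : Unit ⊕ α → ℝ | ∃ t : I,
      v (Sum.inl ()) = (t : ℝ) ∧ ∀ j, (γ t : α → ℝ) j = v (Sum.inr j)} := by
  obtain ⟨h, hdef, hγh⟩ := hγ
  have hgraph : S.DefPred fun v : Unit ⊕ α → ℝ => (0 ≤ v (Sum.inl ()) ∧ v (Sum.inl ()) ≤ 1) ∧
      ∀ j, h (v (Sum.inl ())) j = v (Sum.inr j) :=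
    .and (.and (.le (.const 0) (.coord _)) (.le (.coord _) (.const 1)))
      (.forall_finite fun j =>
        .eq ((hdef j).comp (e := fun v _ => v (Sum.inl ())) fun _ => .coord _) (.coord _))
  refine hgraph.congr fun v => ⟨fun ⟨hv, hj⟩ => ⟨⟨_, hv⟩, rfl, fun j => ?_⟩, ?_⟩
  · rw [hγh]
    exact hj j
  · rintro ⟨t, ht, hj⟩
    exact ⟨ht ▸ t.2, fun j => by rw [ht, ← hγh, hj]⟩

end IsDefinablePath

theorem homotopic_trans_symm_of_square {X : Type*} [TopologicalSpace X] {x y p : X} {γ : Path x y}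
    {a : Path x p} {b : Path y p} (F : C(I × I, X)) (hγ : ∀ s, F (s, 0) = γ s)
    (ha : ∀ t, F (0, t) = a t) (hb : ∀ t, F (1, t) = b t) (hp : ∀ s, F (s, 1) = p) :
    γ.Homotopic (a.trans b.symm) := by
  have : ContractibleSpace I := (convex_Icc (0 : ℝ) 1).contractibleSpace ⟨0, by simp⟩
  let horizontal (t : I) : Path ((0, t) : I × I) (1, t) :=
    ⟨⟨fun s => (s, t), by fun_prop⟩, rfl, rfl⟩
  let vertical (s : I) : Path ((s, 0) : I × I) (s, 1) :=
    ⟨⟨fun t => (s, t), by fun_prop⟩, rfl, rfl⟩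
  have hsquare : (horizontal 0).Homotopic
      ((vertical 0).trans ((horizontal 1).trans (vertical 1).symm)) :=
    SimplyConnectedSpace.paths_homotopic _ _
  have hx : x = F (0, 0) := by rw [hγ, γ.source]
  have hy : y = F (1, 0) := by rw [hγ, γ.target]
  have hhom := (hsquare.map F).pathCast hx hy
  have htop : ((horizontal 0).map F.continuous).cast hx hy = γ := Path.ext (funext hγ)
  have hrest : (((vertical 0).trans ((horizontal 1).trans (vertical 1).symm)).map
      F.continuous).cast hx hy = a.trans ((Path.refl p).trans b.symm) := by
    ext t
    simp only [Path.cast_coe, Path.map_coe, Function.comp_apply, Path.trans_apply]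
    split_ifs
    · exact ha _
    · exact hp _
    · exact hb _
  rw [← htop]
  refine (hrest ▸ hhom).trans (.hcomp (.refl _) ⟨Path.Homotopy.reflTrans _⟩)

theorem IsConicContraction.exists_isDefinablePath {p : c} {V : Set (α → ℝ)}
    {H : (α → ℝ) → ℝ → α → ℝ} (h : S.IsConicContraction (· ∈ c) (p : α → ℝ) V H) {γ : Path x y}
    (hγ : ∀ t, (γ t : α → ℝ) ∈ V) : ∃ δ : Path x y, γ.Homotopic δ ∧ S.IsDefinablePath δ := by
  let F : C(I × I, c) := ⟨fun q => ⟨H (γ q.1) q.2, h.apply_mem p.2 (hγ q.1) (γ q.1).2 q.2.2⟩,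
    .subtype_mk (h.continuousOn.comp_continuous (f := fun q : I × I => ((γ q.1 : α → ℝ), (q.2 : ℝ)))
      (by fun_prop) fun q => ⟨hγ _, q.2.2⟩) _⟩
  have hF0 (s : I) : F (s, 0) = γ s := Subtype.ext (h.apply_zero _ (hγ s))
  have hF1 (s : I) : F (s, 1) = p := Subtype.ext (h.apply_one _ (hγ s))
  let ray (s : I) : Path (γ s) p := ⟨F.comp (.prodMk (.const _ s) (.id _)), hF0 s, hF1 s⟩
  have hray (s : I) : S.IsDefinablePath (ray s) := ⟨H (γ s), h.defFun _ (hγ s), fun _ => rfl⟩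
  exact ⟨_, homotopic_trans_symm_of_square (a := (ray 0).cast γ.source.symm rfl)
    (b := (ray 1).cast γ.target.symm rfl) F hF0 (fun _ => rfl) (fun _ => rfl) hF1,
    .trans (hray 0) (.symm (hray 1))⟩

theorem exists_homotopic_of_locally {X : Type*} [TopologicalSpace X]
    {P : ∀ {a b : X}, Path a b → Prop} (hrefl : ∀ a, P (Path.refl a))
    (htrans : ∀ {a b d : X} {γ : Path a b} {δ : Path b d}, P γ → P δ → P (γ.trans δ))
    (hlocal : ∀ p : X, ∃ U ∈ 𝓝 p, ∀ {a b : X} (γ : Path a b), range γ ⊆ U →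
      ∃ δ : Path a b, γ.Homotopic δ ∧ P δ) {x y : X} (γ : Path x y) :
    ∃ δ : Path x y, γ.Homotopic δ ∧ P δ := by
  choose U hU hlocal using hlocal
  obtain ⟨t, ht0, htmono, ⟨N, hN⟩, htU⟩ := exists_monotone_Icc_subset_open_cover_unitInterval
    (c := fun p => γ ⁻¹' interior (U p)) (fun p => isOpen_interior.preimage γ.continuous)
    fun s _ => mem_iUnion.2 ⟨γ s, mem_interior_iff_mem_nhds.2 (hU _)⟩
  have hsubpath (m : ℕ) : ∃ δ : Path (γ (t 0)) (γ (t m)),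
      (γ.subpath (t 0) (t m)).Homotopic δ ∧ P δ := by
    induction m with
    | zero => exact ⟨Path.refl _, by rw [Path.subpath_self], hrefl _⟩
    | succ m ih =>
      obtain ⟨δ, hδ, hPδ⟩ := ih
      obtain ⟨p, hp⟩ := htU m
      obtain ⟨ε, hε, hPε⟩ := hlocal p (γ.subpath (t m) (t (m + 1))) (by
        rw [Path.range_subpath_of_le _ _ _ (htmono m.le_succ)]
        exact image_subset_iff.2 (hp.trans (preimage_mono interior_subset)))
      exact ⟨δ.trans ε, (Path.Homotopic.symm ⟨Path.Homotopy.subpathTransSubpath ..⟩).trans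
        (hδ.hcomp hε), htrans hPδ hPε⟩
  have hcast {a b : X} (ha : a = x) (hb : b = y) :
      (∃ δ : Path a b, (γ.cast ha hb).Homotopic δ ∧ P δ) →
        ∃ δ : Path x y, γ.Homotopic δ ∧ P δ := by
    subst ha hb
    exact id
  have hγ := hsubpath N
  rw [ht0, hN N le_rfl, Path.subpath_zero_one] at hγ
  exact hcast _ _ hγ

theorem exists_homotopic_isDefinablePath [Finite α] (hc : S.DefSet c) (γ : Path x y) :
    ∃ δ : Path x y, γ.Homotopic δ ∧ S.IsDefinablePath δ := by
  refine exists_homotopic_of_locally (P := S.IsDefinablePath) .refl .trans (fun p => ?_) γ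
  obtain ⟨V, hV, H, hH⟩ := exists_isConicContraction_of_defSet hc p
  exact ⟨_, continuous_subtype_val.continuousAt.preimage_mem_nhds hV, fun γ hγ =>
    hH.exists_isDefinablePath fun t => hγ (mem_range_self t)⟩

end Paths

end OMinimalRealExpansion

theorem path_homotopic_to_definable_path_general (S : OMinimalRealExpansion) {α : Type} [Finite α]
    {c : Set (α → ℝ)} (hc : S.DefSet c) {x y : c} (γ : Path x y) :
    ∃ δ : Path x y, γ.Homotopic δ ∧
      S.DefSet {v : Unit ⊕ α → ℝ | ∃ t : unitInterval,
        v (Sum.inl ()) = (t : ℝ) ∧ ∀ j, ((δ t : α → ℝ) j = v (Sum.inr j))} := by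
  obtain ⟨δ, hγδ, hδ⟩ := OMinimalRealExpansion.exists_homotopic_isDefinablePath hc γ
  exact ⟨δ, hγδ, hδ.defSet_graph⟩

/-- In a connected definable group `G ⊆ ℝⁿ` (with its subspace topology),
every continuous path is homotopic relative to its endpoints to a continuous path whose graph
is definable. -/
theorem path_homotopic_to_definable_path
    (St : OMinimalRealExpansion) {n : ℕ} (c : Set (Fin n → ℝ)) [Group c]
    (hdef : IsDefinableGroup St c) [ConnectedSpace c]
    (x y : c) (σ : Path x y) :
    ∃ σ' : Path x y, σ.Homotopic σ' ∧
      St.DefSet {v : Unit ⊕ Fin n → ℝ | ∃ t : unitInterval,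
        v (Sum.inl ()) = (t : ℝ) ∧ ∀ j, ((σ' t : Fin n → ℝ) j = v (Sum.inr j))} :=
  path_homotopic_to_definable_path_general St hdef.1 σ
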